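/- arXiv:2405.00729 — 2 statements merged into one kernel-verified Lean document; each statement's English description precedes it below -/
import Mathlib

section
/- Let (A, {Δ(λ)}) be a split quasi-hereditary algebra over a commutative Noetherian ring R, with costandard modules ∇(λ). If M lies in F(Δ̃) (modules with a finite filtration whose factors are of the form Δ(λ) ⊗_R U with U ∈ R-proj) and N lies in F(∇̃), then Ext^i_A(M, N) = 0 for all i > 0, and both M and N are projective as R-modules. -/
open scoped TensorProduct
open CategoryTheory

noncomputable section

section Core

variable (R : Type) [CommRing R] (A : Type) [Ring A] [Algebra R A]

/-- The action of `a : A` on an `A`-module as an `R`-linear endomorphism. -/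
def actL (M : Type) [AddCommGroup M] [Module R M] [Module A M] [IsScalarTower R A M]
    (a : A) : M →ₗ[R] M where
  toFun m := a • m
  map_add' := smul_add a
  map_smul' r m := (smul_comm r a m).symm

/-- The right `A`-module (i.e. `Aᵐᵒᵖ`-module) structure on the `R`-linear dual of a left
`A`-module `M`, given by `(aᵒᵖ • f) m = f (a • m)`. -/
instance dualModule (M : Type) [AddCommGroup M] [Module R M] [Module A M]
    [IsScalarTower R A M] : Module Aᵐᵒᵖ (M →ₗ[R] R) where
  smul a f := f.comp (actL R A M a.unop)
  one_smul f := by ext m; show f ((1 : Aᵐᵒᵖ).unop • m) = f m; simp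
  mul_smul a b f := by
    ext m
    show f ((a * b).unop • m) = f (b.unop • a.unop • m)
    simp [mul_smul]
  smul_zero a := rfl
  smul_add a f g := rfl
  add_smul a b f := by
    ext m
    show f ((a + b).unop • m) = f (a.unop • m) + f (b.unop • m)
    simp [add_smul]
  zero_smul f := by ext m; show f ((0 : Aᵐᵒᵖ).unop • m) = 0; simp

@[simp] lemma dualModule_smul_apply (M : Type) [AddCommGroup M] [Module R M] [Module A M]
    [IsScalarTower R A M] (a : Aᵐᵒᵖ) (f : M →ₗ[R] R) (m : M) :
    (a • f) m = f (a.unop • m) := rfl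

instance dualTower (M : Type) [AddCommGroup M] [Module R M] [Module A M]
    [IsScalarTower R A M] : IsScalarTower R Aᵐᵒᵖ (M →ₗ[R] R) := by
  constructor
  intro r a f
  ext m
  show f ((r • a).unop • m) = r • f (a.unop • m)
  rw [MulOpposite.unop_smul, smul_assoc, map_smul]

/-- The left `A`-module structure on the `R`-linear dual of a right `A`-module
(i.e. an `Aᵐᵒᵖ`-module) `M`, given by `(a • f) m = f (aᵒᵖ • m)`. -/
instance dualModule' (M : Type) [AddCommGroup M] [Module R M] [Module Aᵐᵒᵖ M]
    [IsScalarTower R Aᵐᵒᵖ M] : Module A (M →ₗ[R] R) where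
  smul a f := f.comp (actL R Aᵐᵒᵖ M (MulOpposite.op a))
  one_smul f := by ext m; show f (MulOpposite.op (1 : A) • m) = f m; simp
  mul_smul a b f := by
    ext m
    show f (MulOpposite.op (a * b) • m) = f (MulOpposite.op b • MulOpposite.op a • m)
    rw [MulOpposite.op_mul, mul_smul]
  smul_zero a := rfl
  smul_add a f g := rfl
  add_smul a b f := by
    ext m
    show f (MulOpposite.op (a + b) • m) = f (MulOpposite.op a • m) + f (MulOpposite.op b • m)
    rw [MulOpposite.op_add, add_smul, map_add]
  zero_smul f := by ext m; show f (MulOpposite.op (0 : A) • m) = 0; simp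

@[simp] lemma dualModule'_smul_apply (M : Type) [AddCommGroup M] [Module R M] [Module Aᵐᵒᵖ M]
    [IsScalarTower R Aᵐᵒᵖ M] (a : A) (f : M →ₗ[R] R) (m : M) :
    (a • f) m = f (MulOpposite.op a • m) := rfl

instance dualTower' (M : Type) [AddCommGroup M] [Module R M] [Module Aᵐᵒᵖ M]
    [IsScalarTower R Aᵐᵒᵖ M] : IsScalarTower R A (M →ₗ[R] R) := by
  constructor
  intro r a f
  ext m
  show f (MulOpposite.op (r • a) • m) = r • f (MulOpposite.op a • m)
  rw [MulOpposite.op_smul, smul_assoc, map_smul]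

variable (Λ : Type) [Fintype Λ] [PartialOrder Λ]

/-- Data witnessing that `X` is isomorphic to `Δ(λ) ⊗_R U` for some `λ ∈ S` and some finitely
generated projective `R`-module `U`. -/
structure TensorFactor (Δ : Λ → Type) [∀ l, AddCommGroup (Δ l)] [∀ l, Module R (Δ l)]
    [∀ l, Module A (Δ l)] [∀ l, IsScalarTower R A (Δ l)]
    (S : Set Λ) (X : Type) [AddCommGroup X] [Module A X] : Type 1 where
  lam : Λ
  mem : lam ∈ S
  U : ModuleCat.{0} R
  fin : Module.Finite R U
  proj : Module.Projective R U
  iso : X ≃ₗ[A] (TensorProduct R (Δ lam) U)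

/-- `M` belongs to `F(Δ̃_S)`: it is a finitely generated `A`-module with a finite filtration
whose factors are of the form `Δ(λ) ⊗_R U`, `λ ∈ S`, `U` a finitely generated projective
`R`-module. -/
def InFilt (Δ : Λ → Type) [∀ l, AddCommGroup (Δ l)] [∀ l, Module R (Δ l)]
    [∀ l, Module A (Δ l)] [∀ l, IsScalarTower R A (Δ l)]
    (S : Set Λ) (M : Type) [AddCommGroup M] [Module A M] : Prop :=
  Module.Finite A M ∧
  ∃ (n : ℕ) (c : Fin (n + 1) → Submodule A M), c 0 = ⊥ ∧ c (Fin.last n) = ⊤ ∧ Monotone c ∧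
    ∀ i : Fin n, Nonempty (TensorFactor R A Λ Δ S
      (↥(c i.succ) ⧸ (Submodule.comap (c i.succ).subtype (c i.castSucc))))

/-- Data witnessing that `X` is isomorphic to `F(λ)` for some `λ ∈ S`. -/
structure PlainFactor (F : Λ → Type) [∀ l, AddCommGroup (F l)] [∀ l, Module A (F l)]
    (S : Set Λ) (X : Type) [AddCommGroup X] [Module A X] : Type 1 where
  lam : Λ
  mem : lam ∈ S
  iso : X ≃ₗ[A] F lam

/-- `M` has a finite filtration with factors among the modules `F(λ)`, `λ ∈ S`. -/
def InFiltPlain (F : Λ → Type) [∀ l, AddCommGroup (F l)] [∀ l, Module A (F l)]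
    (S : Set Λ) (M : Type) [AddCommGroup M] [Module A M] : Prop :=
  Module.Finite A M ∧
  ∃ (n : ℕ) (c : Fin (n + 1) → Submodule A M), c 0 = ⊥ ∧ c (Fin.last n) = ⊤ ∧ Monotone c ∧
    ∀ i : Fin n, Nonempty (PlainFactor A Λ F S
      (↥(c i.succ) ⧸ (Submodule.comap (c i.succ).subtype (c i.castSucc))))

/-- `X` is a direct summand of `Y` (as `A`-modules). -/
def IsDirectSummand (X Y : Type) [AddCommGroup X] [Module A X] [AddCommGroup Y]
    [Module A Y] : Prop :=
  ∃ (i : X →ₗ[A] Y) (p : Y →ₗ[A] X), p.comp i = LinearMap.id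

/-- `X` belongs to the additive closure `add T`. -/
def InAdd (T : Type) [AddCommGroup T] [Module A T] (X : Type) [AddCommGroup X]
    [Module A X] : Prop :=
  ∃ n : ℕ, IsDirectSummand A X (Fin n → T)

/-- A split quasi-hereditary structure on the `R`-algebra `A` with standard modules
`Δ(λ)`, `λ ∈ Λ` (following Rouquier's module-theoretic definition). -/
structure SplitQH (Δ : Λ → Type) [∀ l, AddCommGroup (Δ l)] [∀ l, Module R (Δ l)]
    [∀ l, Module A (Δ l)] [∀ l, IsScalarTower R A (Δ l)] : Type 1 where
  algFin : Module.Finite R A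
  algProj : Module.Projective R A
  deltaFinA : ∀ l, Module.Finite A (Δ l)
  deltaFinR : ∀ l, Module.Finite R (Δ l)
  deltaProjR : ∀ l, Module.Projective R (Δ l)
  hom_le : ∀ l m : Λ, (∃ f : Δ l →ₗ[A] Δ m, f ≠ 0) → l ≤ m
  endIso : ∀ l, Nonempty ((Module.End A (Δ l)) ≃ₐ[R] R)
  P : Λ → ModuleCat.{0} A
  P_proj : ∀ l, Module.Projective A (P l)
  P_fin : ∀ l, Module.Finite A (P l)
  epi : ∀ l, (P l : Type) →ₗ[A] Δ l
  epi_surj : ∀ l, Function.Surjective (epi l)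
  ker_filt : ∀ l, InFilt R A Λ Δ {m | l < m} ↥(LinearMap.ker (epi l))
  add_gen : ∀ (Q : ModuleCat.{0} A), Module.Finite A Q → Module.Projective A Q →
    InAdd A (∀ l, (P l : Type)) Q

/-- Vanishing of `Ext^i_A(M, N)` (computed in the abelian category of `A`-modules). -/
def extVanish (M : Type) [AddCommGroup M] [Module A M] (N : Type) [AddCommGroup N]
    [Module A N] (i : ℕ) : Prop :=
  Subsingleton (((Ext ℤ (ModuleCat.{0} A) i).obj
    (Opposite.op (ModuleCat.of A M))).obj (ModuleCat.of A N))

/-- `∇` is a family of costandard modules for the split quasi-hereditary algebra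
`(A, {Δ(λ)})`: the `R`-linear duals `D∇(λ)` make `A^op` split quasi-hereditary (with the same
poset), and the `Ext`-orthogonality relations with the standard modules hold. -/
def IsCostandard (Δ : Λ → Type) [∀ l, AddCommGroup (Δ l)] [∀ l, Module R (Δ l)]
    [∀ l, Module A (Δ l)] [∀ l, IsScalarTower R A (Δ l)]
    (N : Λ → Type) [∀ l, AddCommGroup (N l)] [∀ l, Module R (N l)]
    [∀ l, Module A (N l)] [∀ l, IsScalarTower R A (N l)] : Prop :=
  Nonempty (SplitQH R Aᵐᵒᵖ Λ (fun l => (N l →ₗ[R] R))) ∧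
  (∀ l, Nonempty ((Δ l →ₗ[A] N l) ≃ₗ[R] R)) ∧
  (∀ l m, l ≠ m → ∀ f : Δ l →ₗ[A] N m, f = 0) ∧
  (∀ l m : Λ, ∀ i : ℕ, 0 < i → extVanish A (Δ l) (N m) i)

/-- A bundled family of costandard modules. -/
structure CostandardFamily (Δ : Λ → Type) [∀ l, AddCommGroup (Δ l)] [∀ l, Module R (Δ l)]
    [∀ l, Module A (Δ l)] [∀ l, IsScalarTower R A (Δ l)] : Type 1 where
  Nab : Λ → Type
  [acg : ∀ l, AddCommGroup (Nab l)]
  [modR : ∀ l, Module R (Nab l)]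
  [modA : ∀ l, Module A (Nab l)]
  [tower : ∀ l, IsScalarTower R A (Nab l)]
  cost : IsCostandard R A Λ Δ Nab

attribute [instance] CostandardFamily.acg CostandardFamily.modR CostandardFamily.modA
  CostandardFamily.tower

/-- `T` is a family of (partial) tilting modules forming a characteristic tilting module
`⊕ T(λ)`: each `T(λ)` admits an exact sequence `0 → Δ(λ) → T(λ) → X(λ) → 0` with
`X(λ) ∈ F(Δ̃_{μ<λ})` and an exact sequence `0 → Y(λ) → T(λ) → ∇(λ) → 0` with
`Y(λ) ∈ F(∇̃_{μ<λ})`. -/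
def IsCharTilting (Δ : Λ → Type) [∀ l, AddCommGroup (Δ l)] [∀ l, Module R (Δ l)]
    [∀ l, Module A (Δ l)] [∀ l, IsScalarTower R A (Δ l)]
    (N : Λ → Type) [∀ l, AddCommGroup (N l)] [∀ l, Module R (N l)]
    [∀ l, Module A (N l)] [∀ l, IsScalarTower R A (N l)]
    (T : Λ → Type) [∀ l, AddCommGroup (T l)] [∀ l, Module A (T l)] : Prop :=
  ∀ l : Λ,
    (∃ f : Δ l →ₗ[A] T l, Function.Injective f ∧
      InFilt R A Λ Δ {m | m < l} ((T l) ⧸ LinearMap.range f)) ∧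
    (∃ g : T l →ₗ[A] N l, Function.Surjective g ∧
      InFilt R A Λ N {m | m < l} ↥(LinearMap.ker g))

end Core

end

/-! A module `Δ ⊗ U` with `U` finitely generated projective lies in `add Δ`, so `Ext`-vanishing
passes from the modules `Δ(λ)` and `∇(μ)` to all filtration factors, and by the long exact
sequence to all filtered modules. For `R`-projectivity of `∇(μ)`: since `Ext¹_A(Δ(λ), ∇(μ)) = 0`,
the functor `Hom_A(-, ∇(μ))` is exact on filtrations with factors in `Δ̃`; as `Hom_A(Δ(λ), ∇(μ))`
is `R` or `0`, it sends the projectives `P(λ)`, and hence also `A`, to finitely generated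
projective `R`-modules, and `Hom_A(A, ∇(μ)) ≅ ∇(μ)`. -/

section AbelianExt

universe w v u

variable {C : Type u} [Category.{v} C] [Abelian C]

-- `Ext` is the derived functor in which vanishing is stated, while the long exact sequences are
-- available for `Abelian.Ext`; a projective resolution computes both.
lemma subsingleton_ext_functor_iff {k : Type*} [Ring k] [Linear k C] [EnoughProjectives C]
    [HasExt.{w} C] (X Y : C) (n : ℕ) :
    Subsingleton (((Ext k C (n + 1)).obj (Opposite.op X)).obj Y) ↔
      Subsingleton (Abelian.Ext.{w} X Y (n + 1)) := by
  let P := projectiveResolution X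
  have functor_iff : Subsingleton (((Ext k C (n + 1)).obj (Opposite.op X)).obj Y) ↔
      ∀ f : P.complex.X (n + 1) ⟶ Y, P.complex.d (n + 2) (n + 1) ≫ f = 0 →
        ∃ g : P.complex.X n ⟶ Y, P.complex.d (n + 1) n ≫ g = f := by
    rw [← ModuleCat.isZero_iff_subsingleton, (P.isoExt (n + 1) Y).isZero_iff,
      ← HomologicalComplex.exactAt_iff_isZero_homology,
      HomologicalComplex.exactAt_iff' _ n (n + 1) (n + 2) (by simp) (by simp),
      ShortComplex.moduleCat_exact_iff]
    rfl
  rw [functor_iff]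
  constructor
  · intro h
    refine subsingleton_of_forall_eq 0 fun α => ?_
    obtain ⟨f, hf, rfl⟩ := P.extMk_surjective α (n + 2) rfl
    exact (P.extMk_eq_zero_iff f (n + 2) rfl hf n rfl).2 (h f hf)
  · intro h f hf
    exact (P.extMk_eq_zero_iff f (n + 2) rfl hf n rfl).1 (Subsingleton.elim _ _)

variable [HasExt.{w} C] {X X' Y Y' : C} {ι : Type*} [Fintype ι] {n : ℕ}

lemma subsingleton_ext_left_of_sum_comp_eq_id (a : ι → (X ⟶ X')) (b : ι → (X' ⟶ X))
    (hab : ∑ j, a j ≫ b j = 𝟙 X) (hX' : Subsingleton (Abelian.Ext X' Y n)) :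
    Subsingleton (Abelian.Ext X Y n) := by
  refine subsingleton_of_forall_eq 0 fun x => ?_
  rw [← Abelian.Ext.mk₀_id_comp x, ← hab, Abelian.Ext.mk₀_sum, Abelian.Ext.sum_comp]
  refine Finset.sum_eq_zero fun j _ => ?_
  rw [← Abelian.Ext.mk₀_comp_mk₀_assoc,
    Subsingleton.elim ((Abelian.Ext.mk₀ (b j)).comp x (zero_add n)) 0, Abelian.Ext.comp_zero]

lemma subsingleton_ext_right_of_sum_comp_eq_id (a : ι → (Y ⟶ Y')) (b : ι → (Y' ⟶ Y))
    (hab : ∑ j, a j ≫ b j = 𝟙 Y) (hY' : Subsingleton (Abelian.Ext X Y' n)) :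
    Subsingleton (Abelian.Ext X Y n) := by
  refine subsingleton_of_forall_eq 0 fun x => ?_
  rw [← Abelian.Ext.comp_mk₀_id x, ← hab, Abelian.Ext.mk₀_sum, Abelian.Ext.comp_sum]
  refine Finset.sum_eq_zero fun j _ => ?_
  rw [← Abelian.Ext.mk₀_comp_mk₀, ← Abelian.Ext.comp_assoc_of_second_deg_zero,
    Subsingleton.elim (x.comp (Abelian.Ext.mk₀ (a j)) (add_zero n)) 0, Abelian.Ext.zero_comp]

lemma subsingleton_ext_left_of_shortExact {S : ShortComplex C} (hS : S.ShortExact)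
    (h₁ : Subsingleton (Abelian.Ext S.X₁ Y n)) (h₃ : Subsingleton (Abelian.Ext S.X₃ Y n)) :
    Subsingleton (Abelian.Ext S.X₂ Y n) := by
  refine subsingleton_of_forall_eq 0 fun x => ?_
  obtain ⟨y, rfl⟩ :=
    Abelian.Ext.contravariant_sequence_exact₂ hS Y x (Subsingleton.elim _ _)
  rw [Subsingleton.elim y 0, Abelian.Ext.comp_zero]

lemma subsingleton_ext_right_of_shortExact {S : ShortComplex C} (hS : S.ShortExact)
    (h₁ : Subsingleton (Abelian.Ext X S.X₁ n)) (h₃ : Subsingleton (Abelian.Ext X S.X₃ n)) :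
    Subsingleton (Abelian.Ext X S.X₂ n) := by
  refine subsingleton_of_forall_eq 0 fun x => ?_
  obtain ⟨y, rfl⟩ :=
    Abelian.Ext.covariant_sequence_exact₂ X hS x (Subsingleton.elim _ _)
  rw [Subsingleton.elim y 0, Abelian.Ext.zero_comp]

lemma exists_extension_of_subsingleton_ext_one {S : ShortComplex C} (hS : S.ShortExact)
    (h₃ : Subsingleton (Abelian.Ext S.X₃ Y 1)) (φ : S.X₁ ⟶ Y) : ∃ ψ : S.X₂ ⟶ Y, S.f ≫ ψ = φ := by
  obtain ⟨y, hy⟩ := Abelian.Ext.contravariant_sequence_exact₁ hS Y (Abelian.Ext.mk₀ φ)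
    (zero_add 1).symm (Subsingleton.elim _ _)
  obtain ⟨ψ, rfl⟩ := (Abelian.Ext.mk₀_bijective _ _).2 y
  rw [Abelian.Ext.mk₀_comp_mk₀] at hy
  exact ⟨ψ, (Abelian.Ext.mk₀_bijective _ _).1 hy⟩

end AbelianExt

section ModuleExact

universe v u

variable {A : Type u} [Ring A]

lemma exact_inclusion_mkQ {M : Type*} [AddCommGroup M] [Module A M] {K L : Submodule A M}
    (h : K ≤ L) : Function.Exact (Submodule.inclusion h) (K.submoduleOf L).mkQ :=
  LinearMap.exact_iff.2 (by rw [Submodule.ker_mkQ, Submodule.range_inclusion]; rfl)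

variable {X Y Z : Type v} [AddCommGroup X] [Module A X] [AddCommGroup Y] [Module A Y]
  [AddCommGroup Z] [Module A Z] {f : X →ₗ[A] Y} {g : Y →ₗ[A] Z}

lemma shortExact_of_exact (hf : Function.Injective f) (hfg : Function.Exact f g)
    (hg : Function.Surjective g) :
    (ShortComplex.mk (ModuleCat.ofHom f) (ModuleCat.ofHom g)
      (ModuleCat.hom_ext hfg.linearMap_comp_eq_zero)).ShortExact where
  exact := (ShortComplex.ShortExact.moduleCat_exact_iff_function_exact _).2 hfg
  mono_f := (ModuleCat.mono_iff_injective _).2 hf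
  epi_g := (ModuleCat.epi_iff_surjective _).2 hg

lemma exact_lcomp_of_exact (R : Type*) [Semiring R] {N : Type*} [AddCommGroup N] [Module A N]
    [Module R N] [SMulCommClass A R N] (hfg : Function.Exact f g) (hg : Function.Surjective g) :
    Function.Exact (LinearMap.lcomp R N g) (LinearMap.lcomp R N f) := by
  intro φ
  constructor
  · intro hφ
    have range_le : LinearMap.range f ≤ LinearMap.ker φ := LinearMap.range_le_ker_iff.2 hφ
    refine ⟨(LinearMap.range f).liftQ φ range_le ∘ₗ
      (hfg.linearEquivOfSurjective hg).symm.toLinearMap, ?_⟩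
    ext y
    simp
  · rintro ⟨ψ, rfl⟩
    ext x
    simp [hfg.apply_apply_eq_zero]

lemma lcomp_surjective_of_subsingleton_ext_one [Small.{v} A] (R : Type*) [Semiring R] {N : Type v}
    [AddCommGroup N] [Module A N] [Module R N] [SMulCommClass A R N]
    (hf : Function.Injective f) (hfg : Function.Exact f g) (hg : Function.Surjective g)
    (hZ : Subsingleton (Abelian.Ext (ModuleCat.of A Z) (ModuleCat.of A N) 1)) :
    Function.Surjective (LinearMap.lcomp R N f) := by
  intro φ
  obtain ⟨ψ, hψ⟩ := exists_extension_of_subsingleton_ext_one (shortExact_of_exact hf hfg hg) hZ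
    (ModuleCat.ofHom φ)
  exact ⟨ψ.hom, congrArg ModuleCat.Hom.hom hψ⟩

end ModuleExact

section FiniteProjective

universe v

/-- The class `R-proj` of finitely generated projective `R`-modules. -/
def IsFiniteProjective (R : Type*) [Ring R] (M : Type*) [AddCommGroup M] [Module R M] : Prop :=
  Module.Finite R M ∧ Module.Projective R M

namespace IsFiniteProjective

variable {R : Type*} [Ring R] {X Y Z : Type*} [AddCommGroup X] [Module R X] [AddCommGroup Y]
  [Module R Y] [AddCommGroup Z] [Module R Z]

lemma of_finite_of_projective [Module.Finite R X] [Module.Projective R X] :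
    IsFiniteProjective R X :=
  ⟨inferInstance, inferInstance⟩

lemma of_split (hY : IsFiniteProjective R Y) (i : X →ₗ[R] Y) (p : Y →ₗ[R] X)
    (hpi : p ∘ₗ i = LinearMap.id) : IsFiniteProjective R X := by
  obtain ⟨_, _⟩ := hY
  exact ⟨.of_surjective p (LinearMap.surjective_of_comp_eq_id i p hpi), .of_split i p hpi⟩

lemma of_equiv (hX : IsFiniteProjective R X) (e : X ≃ₗ[R] Y) : IsFiniteProjective R Y :=
  hX.of_split e.symm e (by simp)

lemma pi {ι : Type*} [Finite ι] {M : ι → Type*} [∀ i, AddCommGroup (M i)]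
    [∀ i, Module R (M i)] (hM : ∀ i, IsFiniteProjective R (M i)) :
    IsFiniteProjective R (∀ i, M i) := by
  classical
  cases nonempty_fintype ι
  have := fun i => (hM i).1
  have := fun i => (hM i).2
  exact ⟨inferInstance, .of_equiv (DFinsupp.linearEquivFunOnFintype (R := R))⟩

lemma of_exact {A : Type*} [Ring A] [Module A X] [Module A Y] [Module A Z]
    [LinearMap.CompatibleSMul X Y R A] [LinearMap.CompatibleSMul Y Z R A] {f : X →ₗ[A] Y}
    {g : Y →ₗ[A] Z} (hf : Function.Injective f) (hfg : Function.Exact f g)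
    (hg : Function.Surjective g) (hX : IsFiniteProjective R X) (hZ : IsFiniteProjective R Z) :
    IsFiniteProjective R Y := by
  obtain ⟨_, _⟩ := hX
  obtain ⟨_, _⟩ := hZ
  have hfg_R : Function.Exact (f.restrictScalars R) (g.restrictScalars R) := hfg
  obtain ⟨s, hs⟩ := Module.projective_lifting_property (g.restrictScalars R) LinearMap.id hg
  have e : Y ≃ₗ[R] X × Z := (hfg_R.splitSurjectiveEquiv hf ⟨s, hs⟩).1
  exact of_finite_of_projective.of_equiv e.symm

end IsFiniteProjective

lemma isFiniteProjective_hom_of_exact {R : Type*} [CommRing R] {A : Type*} [Ring A] [Algebra R A]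
    {X Y Z N : Type v} [AddCommGroup X] [Module A X] [AddCommGroup Y] [Module A Y]
    [AddCommGroup Z] [Module A Z] [AddCommGroup N] [Module R N] [Module A N] [IsScalarTower R A N]
    [Small.{v} A] {f : X →ₗ[A] Y} {g : Y →ₗ[A] Z} (hf : Function.Injective f)
    (hfg : Function.Exact f g) (hg : Function.Surjective g)
    (hext : Subsingleton (Abelian.Ext (ModuleCat.of A Z) (ModuleCat.of A N) 1))
    (hX : IsFiniteProjective R (X →ₗ[A] N)) (hZ : IsFiniteProjective R (Z →ₗ[A] N)) :
    IsFiniteProjective R (Y →ₗ[A] N) :=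
  .of_exact (f := LinearMap.lcomp R N g) (g := LinearMap.lcomp R N f)
    (fun _ _ => (LinearMap.cancel_right hg).1) (exact_lcomp_of_exact R hfg hg)
    (lcomp_surjective_of_subsingleton_ext_one R hf hfg hg hext) hZ hX

end FiniteProjective

section AdditiveClosure

variable {A : Type} [Ring A] {T X Y : Type} [AddCommGroup T] [Module A T] [AddCommGroup X]
  [Module A X] [AddCommGroup Y] [Module A Y]

lemma inAdd_iff_exists_sum_comp_eq_id :
    InAdd A T X ↔ ∃ (n : ℕ) (a : Fin n → X →ₗ[A] T) (b : Fin n → T →ₗ[A] X),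
      ∑ j, b j ∘ₗ a j = LinearMap.id := by
  constructor
  · rintro ⟨n, i, p, hpi⟩
    refine ⟨n, fun j => LinearMap.proj j ∘ₗ i, fun j => p ∘ₗ LinearMap.single A (fun _ => T) j, ?_⟩
    ext x
    simpa [← map_sum, Finset.univ_sum_single] using LinearMap.congr_fun hpi x
  · rintro ⟨n, a, b, hab⟩
    refine ⟨n, LinearMap.pi a, LinearMap.lsum A _ ℕ b, ?_⟩
    ext x
    simpa using LinearMap.congr_fun hab x

lemma InAdd.refl (A : Type) [Ring A] (T : Type) [AddCommGroup T] [Module A T] : InAdd A T T :=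
  inAdd_iff_exists_sum_comp_eq_id.2 ⟨1, fun _ => LinearMap.id, fun _ => LinearMap.id, by simp⟩

lemma InAdd.of_equiv (h : InAdd A T Y) (e : X ≃ₗ[A] Y) : InAdd A T X := by
  obtain ⟨n, i, p, hpi⟩ := h
  refine ⟨n, i ∘ₗ e, e.symm ∘ₗ p, ?_⟩
  ext x
  simpa using congrArg e.symm (LinearMap.congr_fun hpi (e x))

variable {R : Type} [CommRing R] [Algebra R A]

lemma inAdd_tensorProduct [Module R T] [IsScalarTower R A T] (U : Type) [AddCommGroup U]
    [Module R U] [Module.Finite R U] [Module.Projective R U] : InAdd A T (T ⊗[R] U) := by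
  obtain ⟨n, f, g, -, -, hfg⟩ := Module.Finite.exists_comp_eq_id_of_projective R U
  have dual_basis (u : U) : ∑ j, g u j • f (Pi.single j 1) = u := by
    calc
      ∑ j, g u j • f (Pi.single j 1) = f (∑ j, g u j • Pi.single j 1) := by
        simp only [map_sum, map_smul]
      _ = f (g u) := by rw [← pi_eq_sum_univ' (g u)]
      _ = u := LinearMap.congr_fun hfg u
  refine inAdd_iff_exists_sum_comp_eq_id.2 ⟨n,
    fun j => (TensorProduct.AlgebraTensorModule.rid R A T).toLinearMap ∘ₗ
      TensorProduct.AlgebraTensorModule.map LinearMap.id (LinearMap.proj j ∘ₗ g),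
    fun j => (TensorProduct.AlgebraTensorModule.mk R A T U).flip (f (Pi.single j 1)), ?_⟩
  ext t u
  suffices ∑ j, (g u j • t) ⊗ₜ[R] f (Pi.single j 1) = t ⊗ₜ[R] u by simpa
  simp only [TensorProduct.smul_tmul]
  rw [← TensorProduct.tmul_sum, dual_basis]

lemma TensorFactor.inAdd {Λ : Type} {Δ : Λ → Type} [∀ l, AddCommGroup (Δ l)]
    [∀ l, Module R (Δ l)] [∀ l, Module A (Δ l)] [∀ l, IsScalarTower R A (Δ l)] {S : Set Λ}
    (t : TensorFactor R A Λ Δ S X) : InAdd A (Δ t.lam) X := by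
  have := t.fin
  have := t.proj
  exact (inAdd_tensorProduct t.U).of_equiv t.iso

lemma InAdd.exists_sum_ofHom_comp_eq_id (h : InAdd A T X) :
    ∃ (n : ℕ) (a : Fin n → (ModuleCat.of A X ⟶ ModuleCat.of A T))
      (b : Fin n → (ModuleCat.of A T ⟶ ModuleCat.of A X)),
      ∑ j, a j ≫ b j = 𝟙 (ModuleCat.of A X) := by
  obtain ⟨n, a, b, hab⟩ := inAdd_iff_exists_sum_comp_eq_id.1 h
  refine ⟨n, fun j => ModuleCat.ofHom (a j), fun j => ModuleCat.ofHom (b j), ?_⟩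
  apply ModuleCat.hom_ext
  simpa [ModuleCat.hom_sum] using hab

lemma InAdd.subsingleton_ext_left {N : Type} [AddCommGroup N] [Module A N] {n : ℕ}
    (h : InAdd A T X)
    (hT : Subsingleton (Abelian.Ext (ModuleCat.of A T) (ModuleCat.of A N) n)) :
    Subsingleton (Abelian.Ext (ModuleCat.of A X) (ModuleCat.of A N) n) :=
  have ⟨_, a, b, hab⟩ := h.exists_sum_ofHom_comp_eq_id
  subsingleton_ext_left_of_sum_comp_eq_id a b hab hT

lemma InAdd.subsingleton_ext_right {M : Type} [AddCommGroup M] [Module A M] {n : ℕ}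
    (h : InAdd A T X)
    (hT : Subsingleton (Abelian.Ext (ModuleCat.of A M) (ModuleCat.of A T) n)) :
    Subsingleton (Abelian.Ext (ModuleCat.of A M) (ModuleCat.of A X) n) :=
  have ⟨_, a, b, hab⟩ := h.exists_sum_ofHom_comp_eq_id
  subsingleton_ext_right_of_sum_comp_eq_id a b hab hT

lemma InAdd.isFiniteProjective [Module R T] [IsScalarTower R A T] [Module R X]
    [IsScalarTower R A X] (h : InAdd A T X) (hT : IsFiniteProjective R T) :
    IsFiniteProjective R X := by
  obtain ⟨n, i, p, hpi⟩ := h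
  refine (IsFiniteProjective.pi fun _ : Fin n => hT).of_split (i.restrictScalars R)
    (p.restrictScalars R) ?_
  ext x
  exact LinearMap.congr_fun hpi x

lemma InAdd.isFiniteProjective_hom {N : Type} [AddCommGroup N] [Module R N] [Module A N]
    [IsScalarTower R A N] (h : InAdd A T X) (hT : IsFiniteProjective R (T →ₗ[A] N)) :
    IsFiniteProjective R (X →ₗ[A] N) := by
  obtain ⟨n, i, p, hpi⟩ := h
  have hpow : IsFiniteProjective R ((Fin n → T) →ₗ[A] N) :=
    (IsFiniteProjective.pi fun _ => hT).of_equiv (LinearMap.lsum A (fun _ => T) R)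
  refine hpow.of_split (LinearMap.lcomp R N p) (LinearMap.lcomp R N i) ?_
  ext φ x
  exact congrArg φ (LinearMap.congr_fun hpi x)

end AdditiveClosure

section Filtration

variable {R : Type} [CommRing R] {A : Type} [Ring A] [Algebra R A] {Λ : Type} {Δ : Λ → Type}
  [∀ l, AddCommGroup (Δ l)] [∀ l, Module R (Δ l)] [∀ l, Module A (Δ l)]
  [∀ l, IsScalarTower R A (Δ l)] {S : Set Λ}

namespace InFilt

variable {M : Type} [AddCommGroup M] [Module A M]

theorem induction (hM : InFilt R A Λ Δ S M) {motive : Submodule A M → Prop} (bot : motive ⊥)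
    (step : ∀ (K L : Submodule A M) (l : Λ), K ≤ L → l ∈ S →
      InAdd A (Δ l) (L ⧸ K.submoduleOf L) → motive K → motive L) : motive ⊤ := by
  obtain ⟨-, n, c, hbot, htop, hmono, hfactor⟩ := hM
  have motive_chain (i : Fin (n + 1)) : motive (c i) := by
    induction i using Fin.induction with
    | zero => rwa [hbot]
    | succ i ih =>
      obtain ⟨t⟩ := hfactor i
      exact step _ _ t.lam (hmono i.castSucc_le_succ) t.mem t.inAdd ih
  exact htop ▸ motive_chain (Fin.last n)

theorem isFiniteProjective [Module R M] [IsScalarTower R A M] (hM : InFilt R A Λ Δ S M)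
    (hΔ : ∀ l ∈ S, IsFiniteProjective R (Δ l)) : IsFiniteProjective R M := by
  suffices IsFiniteProjective R (⊤ : Submodule A M) from
    this.of_equiv (Submodule.topEquiv.restrictScalars R)
  refine hM.induction (motive := fun K => IsFiniteProjective R K) .of_finite_of_projective ?_
  intro K L l hKL hl hfactor hK
  exact .of_exact (Submodule.inclusion_injective hKL) (exact_inclusion_mkQ hKL)
    (Submodule.mkQ_surjective _) hK (hfactor.isFiniteProjective (hΔ l hl))

theorem subsingleton_ext_left {N : Type} [AddCommGroup N] [Module A N] {n : ℕ}
    (hM : InFilt R A Λ Δ S M)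
    (hΔ : ∀ l ∈ S, Subsingleton (Abelian.Ext (ModuleCat.of A (Δ l)) (ModuleCat.of A N) n)) :
    Subsingleton (Abelian.Ext (ModuleCat.of A M) (ModuleCat.of A N) n) := by
  refine ((InAdd.refl A _).of_equiv Submodule.topEquiv.symm).subsingleton_ext_left
    (hM.induction (motive := fun K =>
      Subsingleton (Abelian.Ext (ModuleCat.of A K) (ModuleCat.of A N) n)) ?_ ?_)
  · have := (ModuleCat.isZero_of_subsingleton
      (ModuleCat.of A (⊥ : Submodule A M))).hasProjectiveDimensionLT_zero
    exact HasProjectiveDimensionLT.subsingleton _ 0 n n.zero_le _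
  · intro K L l hKL hl hfactor hK
    exact subsingleton_ext_left_of_shortExact
      (shortExact_of_exact (Submodule.inclusion_injective hKL) (exact_inclusion_mkQ hKL)
        (Submodule.mkQ_surjective _)) hK (hfactor.subsingleton_ext_left (hΔ l hl))

theorem subsingleton_ext_right {X : Type} [AddCommGroup X] [Module A X] {n : ℕ}
    (hM : InFilt R A Λ Δ S M)
    (hΔ : ∀ l ∈ S, Subsingleton (Abelian.Ext (ModuleCat.of A X) (ModuleCat.of A (Δ l)) n)) :
    Subsingleton (Abelian.Ext (ModuleCat.of A X) (ModuleCat.of A M) n) := by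
  refine ((InAdd.refl A _).of_equiv Submodule.topEquiv.symm).subsingleton_ext_right
    (hM.induction (motive := fun K =>
      Subsingleton (Abelian.Ext (ModuleCat.of A X) (ModuleCat.of A K) n)) ?_ ?_)
  · have := (ModuleCat.isZero_of_subsingleton
      (ModuleCat.of A (⊥ : Submodule A M))).hasInjectiveDimensionLT_zero
    exact HasInjectiveDimensionLT.subsingleton _ 0 n n.zero_le _
  · intro K L l hKL hl hfactor hK
    exact subsingleton_ext_right_of_shortExact
      (shortExact_of_exact (Submodule.inclusion_injective hKL) (exact_inclusion_mkQ hKL)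
        (Submodule.mkQ_surjective _)) hK (hfactor.subsingleton_ext_right (hΔ l hl))

theorem isFiniteProjective_hom {N : Type} [AddCommGroup N] [Module R N] [Module A N]
    [IsScalarTower R A N] (hM : InFilt R A Λ Δ S M)
    (hext : ∀ l ∈ S, Subsingleton (Abelian.Ext (ModuleCat.of A (Δ l)) (ModuleCat.of A N) 1))
    (hhom : ∀ l ∈ S, IsFiniteProjective R (Δ l →ₗ[A] N)) :
    IsFiniteProjective R (M →ₗ[A] N) := by
  refine ((InAdd.refl A _).of_equiv Submodule.topEquiv.symm).isFiniteProjective_hom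
    (hM.induction (motive := fun K => IsFiniteProjective R (K →ₗ[A] N))
      .of_finite_of_projective ?_)
  intro K L l hKL hl hfactor hK
  exact isFiniteProjective_hom_of_exact (Submodule.inclusion_injective hKL)
    (exact_inclusion_mkQ hKL) (Submodule.mkQ_surjective _)
    (hfactor.subsingleton_ext_left (hext l hl)) hK (hfactor.isFiniteProjective_hom (hhom l hl))

end InFilt

end Filtration

section QuasiHereditary

variable {R : Type} [CommRing R] {A : Type} [Ring A] [Algebra R A] {Λ : Type} [PartialOrder Λ]
  {Δ : Λ → Type} [∀ l, AddCommGroup (Δ l)] [∀ l, Module R (Δ l)] [∀ l, Module A (Δ l)]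
  [∀ l, IsScalarTower R A (Δ l)]

theorem SplitQH.isFiniteProjective [Finite Λ] (h : SplitQH R A Λ Δ) {N : Type} [AddCommGroup N]
    [Module R N] [Module A N] [IsScalarTower R A N]
    (hext : ∀ l, Subsingleton (Abelian.Ext (ModuleCat.of A (Δ l)) (ModuleCat.of A N) 1))
    (hhom : ∀ l, IsFiniteProjective R (Δ l →ₗ[A] N)) : IsFiniteProjective R N := by
  classical
  cases nonempty_fintype Λ
  have hom_ker (l : Λ) : IsFiniteProjective R (LinearMap.ker (h.epi l) →ₗ[A] N) :=
    (h.ker_filt l).isFiniteProjective_hom (fun m _ => hext m) (fun m _ => hhom m)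
  have hom_P (l : Λ) : IsFiniteProjective R (h.P l →ₗ[A] N) :=
    isFiniteProjective_hom_of_exact (LinearMap.ker (h.epi l)).subtype_injective
      (h.epi l).exact_subtype_ker_map (h.epi_surj l) (hext l) (hom_ker l) (hhom l)
  have hom_pi_P : IsFiniteProjective R ((∀ l, h.P l) →ₗ[A] N) :=
    (IsFiniteProjective.pi hom_P).of_equiv (LinearMap.lsum A (fun l => (h.P l : Type)) R)
  have regular_inAdd : InAdd A (∀ l, h.P l) A :=
    h.add_gen (ModuleCat.of A A) (Module.Finite.self A) (inferInstanceAs (Module.Projective A A))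
  exact (regular_inAdd.isFiniteProjective_hom hom_pi_P).of_equiv
    (LinearMap.ringLmapEquivSelf A R N)

theorem IsCostandard.isFiniteProjective_hom {Nb : Λ → Type} [∀ l, AddCommGroup (Nb l)]
    [∀ l, Module R (Nb l)] [∀ l, Module A (Nb l)] [∀ l, IsScalarTower R A (Nb l)]
    (hc : IsCostandard R A Λ Δ Nb) (l m : Λ) : IsFiniteProjective R (Δ l →ₗ[A] Nb m) := by
  obtain ⟨-, hom_diagonal, hom_offDiagonal, -⟩ := hc
  obtain rfl | hlm := eq_or_ne l m
  · obtain ⟨e⟩ := hom_diagonal l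
    exact IsFiniteProjective.of_finite_of_projective.of_equiv e.symm
  · have := subsingleton_of_forall_eq 0 (hom_offDiagonal l m hlm)
    exact .of_finite_of_projective

theorem ext_vanishes_for_filtered_modules_general [Finite Λ] {ι : Type} {Nb : ι → Type}
    [∀ m, AddCommGroup (Nb m)] [∀ m, Module R (Nb m)] [∀ m, Module A (Nb m)]
    [∀ m, IsScalarTower R A (Nb m)] (h : SplitQH R A Λ Δ)
    (hhom : ∀ l m, IsFiniteProjective R (Δ l →ₗ[A] Nb m))
    (hext : ∀ l m, ∀ i : ℕ, 0 < i → extVanish A (Δ l) (Nb m) i)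
    {M : Type} [AddCommGroup M] [Module R M] [Module A M] [IsScalarTower R A M]
    {N : Type} [AddCommGroup N] [Module R N] [Module A N] [IsScalarTower R A N]
    {S : Set Λ} {T : Set ι} (hM : InFilt R A Λ Δ S M) (hN : InFilt R A ι Nb T N) :
    (∀ i : ℕ, 0 < i → extVanish A M N i) ∧ IsFiniteProjective R M ∧ IsFiniteProjective R N := by
  have ext_subsingleton (l : Λ) (m : ι) (n : ℕ) :
      Subsingleton (Abelian.Ext (ModuleCat.of A (Δ l)) (ModuleCat.of A (Nb m)) (n + 1)) :=
    (subsingleton_ext_functor_iff _ _ n).1 (hext l m (n + 1) n.succ_pos)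
  have Nb_isFiniteProjective (m : ι) : IsFiniteProjective R (Nb m) :=
    h.isFiniteProjective (fun l => ext_subsingleton l m 0) (fun l => hhom l m)
  refine ⟨fun i hi => ?_, hM.isFiniteProjective fun l _ => ⟨h.deltaFinR l, h.deltaProjR l⟩,
    hN.isFiniteProjective fun m _ => Nb_isFiniteProjective m⟩
  obtain ⟨n, rfl⟩ := Nat.exists_eq_succ_of_ne_zero hi.ne'
  exact (subsingleton_ext_functor_iff _ _ n).2 <| hN.subsingleton_ext_right fun m _ =>
    hM.subsingleton_ext_left fun l _ => ext_subsingleton l m n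

end QuasiHereditary

noncomputable section

/-- If `M ∈ F(Δ̃)` and `N ∈ F(∇̃)`, then `Ext^i_A(M, N) = 0` for all
`i > 0`, and both `M` and `N` are (finitely generated) projective `R`-modules. -/
theorem ext_vanishes_for_filtered_modules
    (R : Type) [CommRing R] [IsNoetherianRing R]
    (A : Type) [Ring A] [Algebra R A]
    (Λ : Type) [Fintype Λ] [PartialOrder Λ]
    (Δ : Λ → Type) [∀ l, AddCommGroup (Δ l)] [∀ l, Module R (Δ l)]
    [∀ l, Module A (Δ l)] [∀ l, IsScalarTower R A (Δ l)]
    (Nb : Λ → Type) [∀ l, AddCommGroup (Nb l)] [∀ l, Module R (Nb l)]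
    [∀ l, Module A (Nb l)] [∀ l, IsScalarTower R A (Nb l)]
    (h : SplitQH R A Λ Δ) (hc : IsCostandard R A Λ Δ Nb)
    (M : Type) [AddCommGroup M] [Module R M] [Module A M] [IsScalarTower R A M]
    (N : Type) [AddCommGroup N] [Module R N] [Module A N] [IsScalarTower R A N]
    (hM : InFilt R A Λ Δ Set.univ M) (hN : InFilt R A Λ Nb Set.univ N) :
    (∀ i : ℕ, 0 < i → extVanish A M N i) ∧
    (Module.Finite R M ∧ Module.Projective R M) ∧
    (Module.Finite R N ∧ Module.Projective R N) :=
  ext_vanishes_for_filtered_modules_general h hc.isFiniteProjective_hom hc.2.2.2 hM hN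

end
end

section
/- Let (A, {Δ(λ)}) be a split quasi-hereditary algebra over a commutative Noetherian ring R and let M be a finitely generated A-module that is projective over R. If Ext^1_A(M, ∇(λ)) = 0 for all λ ∈ Λ, then M belongs to F(Δ̃). Dually, if Ext^1_A(Δ(λ), M) = 0 for all λ ∈ Λ, then M belongs to F(∇̃). -/
open scoped TensorProduct
open CategoryTheory

/-!
List `Λ` with larger elements first. The trace ideals of the projectives `P(λ)` then filter `A`,
with layers `Δ(λ) ⊗ U_λ`, `U_λ = Hom_A(Δ(λ), A/J)`. If `Ext¹_A(Δ(λ), M) = 0` for all `λ`, applying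
`Hom_A(-, M)` filters `M` by the submodules annihilated by the trace ideals `J`, with layers
`Hom_R(U_λ, Hom_A(Δ(λ), M))`. For `M = ∇(λ)` there is only one layer and `Hom_A(Δ(λ), ∇(λ)) ≃ R`,
so `∇(λ) ≃ U_λ*` and the layers for general `M` are `∇(λ) ⊗ Hom_A(Δ(λ), M)`. The second factor is
finitely generated projective over `R`, by downward induction along `0 → K(λ) → P(λ) → Δ(λ) → 0`.

The criterion for standard filtrations follows by `R`-duality: `Δ(λ)*` are costandard modules over
`Aᵐᵒᵖ`, and `Ext¹(∇(λ)*, M*)` vanishes together with `Ext¹_A(M, ∇(λ))`.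
-/

universe u

section Exactness

variable (S : Type*) [Semiring S] {A X X' X'' M : Type*} [Ring A] [AddCommGroup X] [Module A X]
  [AddCommGroup X'] [Module A X'] [AddCommGroup X''] [Module A X''] [AddCommGroup M] [Module A M]
  {i : X' →ₗ[A] X} {p : X →ₗ[A] X''}

lemma exact_lcomp [Module S M] [SMulCommClass A S M] (hip : Function.Exact i p)
    (hp : Function.Surjective p) :
    Function.Exact (LinearMap.lcomp S M p) (LinearMap.lcomp S M i) := by
  refine fun f => ⟨fun hf => ?_, ?_⟩
  · have hle : LinearMap.range i ≤ LinearMap.ker f := by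
      rintro _ ⟨x, rfl⟩
      exact LinearMap.congr_fun hf x
    refine ⟨(LinearMap.range i).liftQ f hle ∘ₗ (hip.linearEquivOfSurjective hp).symm, ?_⟩
    ext x
    have : (hip.linearEquivOfSurjective hp).symm (p x) = Submodule.Quotient.mk x :=
      (LinearEquiv.symm_apply_eq _).2 rfl
    simp [this]
  · rintro ⟨f, rfl⟩
    ext x
    simp [hip.apply_apply_eq_zero x]

variable [Module S X] [SMulCommClass A S X] [Module S X'] [SMulCommClass A S X']
  [LinearMap.CompatibleSMul X' X S A]

lemma compRight_injective (hi : Function.Injective i) :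
    Function.Injective (LinearMap.compRight S (M := M) i) := fun _ _ h =>
  LinearMap.ext fun x => hi (LinearMap.congr_fun h x)

variable [Module S X''] [SMulCommClass A S X''] [LinearMap.CompatibleSMul X X'' S A]

lemma exact_compRight (hi : Function.Injective i) (hip : Function.Exact i p) :
    Function.Exact (LinearMap.compRight S (M := M) i) (LinearMap.compRight S (M := M) p) := by
  refine fun f => ⟨fun hf => ?_, ?_⟩
  · have hmem : ∀ x, f x ∈ LinearMap.range i := fun x => (hip _).1 (LinearMap.congr_fun hf x)
    refine ⟨(LinearEquiv.ofInjective i hi).symm ∘ₗ f.codRestrict _ hmem, LinearMap.ext fun x => ?_⟩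
    exact congrArg Subtype.val
      ((LinearEquiv.ofInjective i hi).apply_symm_apply (f.codRestrict _ hmem x))
  · rintro ⟨f, rfl⟩
    ext x
    simp [hip.apply_apply_eq_zero (f x)]

end Exactness

section FinProj

/-- Finitely generated projective modules. -/
structure IsFinProj (R V : Type*) [CommRing R] [AddCommGroup V] [Module R V] : Prop where
  finite : Module.Finite R V
  projective : Module.Projective R V

namespace IsFinProj

variable {R V V' V'' : Type*} [CommRing R] [AddCommGroup V] [Module R V] [AddCommGroup V']
  [Module R V'] [AddCommGroup V''] [Module R V'']

protected lemma self : IsFinProj R R := ⟨inferInstance, inferInstance⟩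

lemma of_subsingleton [Subsingleton V] : IsFinProj R V := ⟨inferInstance, inferInstance⟩

lemma of_retract (h : IsFinProj R V) (i : V' →ₗ[R] V) (p : V →ₗ[R] V')
    (hip : p ∘ₗ i = LinearMap.id) : IsFinProj R V' where
  finite := have := h.finite
    Module.Finite.of_surjective p fun v => ⟨i v, LinearMap.congr_fun hip v⟩
  projective := have := h.projective
    Module.Projective.of_split i p hip

lemma of_equiv (h : IsFinProj R V) (e : V' ≃ₗ[R] V) : IsFinProj R V' :=
  h.of_retract e.toLinearMap e.symm.toLinearMap (by ext; simp)

lemma linearMap (h : IsFinProj R V) (h' : IsFinProj R V') : IsFinProj R (V →ₗ[R] V') := by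
  obtain ⟨_, _⟩ := h
  obtain ⟨_, _⟩ := h'
  exact of_equiv (V := Module.Dual R V ⊗[R] V') ⟨inferInstance, inferInstance⟩
    (dualTensorHomEquiv R V V').symm

lemma exists_dual_basis (h : IsFinProj R V) :
    ∃ (n : ℕ) (a : Fin n → V →ₗ[R] R) (b : Fin n → V), ∀ v, ∑ k, a k v • b k = v := by
  obtain ⟨_, _⟩ := h
  obtain ⟨n, f, g, -, -, hfg⟩ := Module.Finite.exists_comp_eq_id_of_projective R V
  refine ⟨n, fun k => LinearMap.proj k ∘ₗ g, fun k => f (Pi.single k 1), fun v => ?_⟩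
  conv_rhs => rw [← LinearMap.id_apply (R := R) v, ← hfg, LinearMap.comp_apply,
    pi_eq_sum_univ' (g v), map_sum]
  simp only [map_smul]
  rfl

section ShortExact

variable {i : V' →ₗ[R] V} {p : V →ₗ[R] V''} (hi : Function.Injective i)
  (hip : Function.Exact i p) (hp : Function.Surjective p)
include hi hip hp

lemma nonempty_equiv_prod (h'' : IsFinProj R V'') : Nonempty (V ≃ₗ[R] V' × V'') := by
  have := h''.projective
  obtain ⟨s, hs⟩ := p.exists_rightInverse_of_surjective (LinearMap.range_eq_top.2 hp)
  exact ⟨(hip.splitSurjectiveEquiv hi ⟨s, hs⟩).1⟩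

lemma of_exact (h' : IsFinProj R V') (h'' : IsFinProj R V'') : IsFinProj R V := by
  obtain ⟨e⟩ := nonempty_equiv_prod hi hip hp h''
  obtain ⟨_, _⟩ := h'
  obtain ⟨_, _⟩ := h''
  exact of_equiv ⟨inferInstance, inferInstance⟩ e

lemma left_of_exact (h : IsFinProj R V) (h'' : IsFinProj R V'') : IsFinProj R V' := by
  obtain ⟨e⟩ := nonempty_equiv_prod hi hip hp h''
  exact h.of_retract (e.symm.toLinearMap ∘ₗ LinearMap.inl R V' V'')
    (LinearMap.fst R V' V'' ∘ₗ e.toLinearMap) (by ext; simp)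

end ShortExact

end IsFinProj

end FinProj

section ExtOne

/-- Elementary form of `Ext¹_A(X, M) = 0`: every map into `M` from the kernel of a surjection
`E → X` extends to `E`. -/
def ExtOneVanishes (A X M : Type u) [Ring A] [AddCommGroup X] [Module A X] [AddCommGroup M]
    [Module A M] : Prop :=
  ∀ (E : Type u) [AddCommGroup E] [Module A E] (f : E →ₗ[A] X), Function.Surjective f →
    ∀ g : LinearMap.ker f →ₗ[A] M, ∃ h : E →ₗ[A] M, h ∘ₗ (LinearMap.ker f).subtype = g

namespace ExtOneVanishes

variable {A X X' X'' M M' M'' P : Type u} [Ring A] [AddCommGroup X] [Module A X]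
  [AddCommGroup X'] [Module A X'] [AddCommGroup X''] [Module A X''] [AddCommGroup M] [Module A M]
  [AddCommGroup M'] [Module A M'] [AddCommGroup M''] [Module A M''] [AddCommGroup P] [Module A P]

lemma of_presentation [Module.Projective A P] (q : P →ₗ[A] X) (hq : Function.Surjective q)
    (hext : ∀ g : LinearMap.ker q →ₗ[A] M, ∃ h : P →ₗ[A] M, h ∘ₗ (LinearMap.ker q).subtype = g) :
    ExtOneVanishes A X M := by
  intro E _ _ f hf g
  obtain ⟨s, hs⟩ := Module.projective_lifting_property f q hf
  have hs' : ∀ x, f (s x) = q x := LinearMap.congr_fun hs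
  let sKer : LinearMap.ker q →ₗ[A] LinearMap.ker f := s.restrict fun x hx => by simpa [hs'] using hx
  obtain ⟨h, hh⟩ := hext (g ∘ₗ sKer)
  -- `E` is the pushout of `ker f ← ker q → P`, so `g` and `h` glue.
  have hsurj : Function.Surjective ((LinearMap.ker f).subtype.coprod s) := fun e => by
    obtain ⟨x, hx⟩ := hq (f e)
    exact ⟨(⟨e - s x, by simp [hs', hx]⟩, x), by simp⟩
  have hexact : Function.Exact ((-sKer).prod (LinearMap.ker q).subtype)
      ((LinearMap.ker f).subtype.coprod s) := by
    rintro ⟨n, x⟩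
    refine ⟨fun hnx => ?_, ?_⟩
    · have hn : (n : E) = -s x := eq_neg_of_add_eq_zero_left hnx
      have hx : q x = 0 := by simpa [hn, hs'] using n.2
      exact ⟨⟨x, hx⟩, Prod.ext (Subtype.ext hn.symm) rfl⟩
    · rintro ⟨x, h⟩
      obtain ⟨rfl, rfl⟩ := Prod.ext_iff.1 h
      exact neg_add_cancel (s x)
  obtain ⟨k, hk⟩ := (exact_lcomp ℤ hexact hsurj (g.coprod h)).1 <| LinearMap.ext fun x => by
    have : h x = g (sKer x) := LinearMap.congr_fun hh x
    simp [this]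
  exact ⟨k, LinearMap.ext fun x => by simpa using LinearMap.congr_fun hk (x, 0)⟩

variable {i : X' →ₗ[A] X} {p : X →ₗ[A] X''} (hi : Function.Injective i) (hip : Function.Exact i p)

include hi hip in
lemma lcomp_surjective (S : Type*) [Semiring S] [Module S M] [SMulCommClass A S M]
    (hp : Function.Surjective p) (h : ExtOneVanishes A X'' M) :
    Function.Surjective (LinearMap.lcomp S M i) := by
  intro g
  let e : X' ≃ₗ[A] LinearMap.ker p :=
    LinearEquiv.ofInjective i hi ≪≫ₗ LinearEquiv.ofEq _ _ hip.linearMap_ker_eq.symm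
  obtain ⟨h, hh⟩ := h X p hp (g ∘ₗ e.symm)
  exact ⟨h, LinearMap.ext fun x =>
    (LinearMap.congr_fun hh (e x)).trans (congrArg g (e.symm_apply_apply x))⟩

include hi hip in
lemma of_exact (hp : Function.Surjective p) (h' : ExtOneVanishes A X' M)
    (h'' : ExtOneVanishes A X'' M) : ExtOneVanishes A X M := by
  intro E _ _ f hf g
  let K := LinearMap.ker (p ∘ₗ f)
  obtain ⟨f', hf'⟩ := (exact_compRight ℤ hi hip (f ∘ₗ K.subtype)).1 (LinearMap.ext fun x => x.2)
  have hf'_apply : ∀ x : K, i (f' x) = f x := LinearMap.congr_fun hf'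
  let j : LinearMap.ker f →ₗ[A] K := Submodule.inclusion (LinearMap.ker_le_ker_comp f p)
  have hf'surj : Function.Surjective f' := fun x' => by
    obtain ⟨e, he⟩ := hf (i x')
    have hmem : e ∈ K := by simp [K, he, hip.apply_apply_eq_zero]
    exact ⟨⟨e, hmem⟩, hi ((hf'_apply _).trans he)⟩
  have hjf' : Function.Exact j f' := by
    refine LinearMap.exact_iff.2 (Submodule.ext fun x => ?_)
    rw [LinearMap.mem_ker, ← map_eq_zero_iff i hi, hf'_apply]
    exact ⟨fun hx => ⟨⟨x, hx⟩, rfl⟩, by rintro ⟨y, rfl⟩; exact y.2⟩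
  obtain ⟨k, hk⟩ := h'.lcomp_surjective (Submodule.inclusion_injective _) hjf' ℤ hf'surj g
  obtain ⟨h, hh⟩ := h'' E (p ∘ₗ f) (hp.comp hf) k
  exact ⟨h, by rw [← hk, ← hh]; rfl⟩

lemma of_subsingleton [Subsingleton X] : ExtOneVanishes A X M := by
  intro E _ _ f _ g
  have hker : ∀ x, x ∈ LinearMap.ker f := fun x => Subsingleton.elim _ _
  exact ⟨g ∘ₗ LinearMap.id.codRestrict _ hker, rfl⟩

lemma compRight_surjective {i : M' →ₗ[A] M} {p : M →ₗ[A] M''} (hi : Function.Injective i)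
    (hip : Function.Exact i p) (hp : Function.Surjective p) (h : ExtOneVanishes A X M')
    (S : Type*) [Semiring S] [Module S M] [SMulCommClass A S M] [Module S M'']
    [SMulCommClass A S M''] [LinearMap.CompatibleSMul M M'' S A] :
    Function.Surjective (LinearMap.compRight S (M := X) p) := by
  intro q
  -- Lift `q` to a free cover of `X`; the hypothesis corrects the lift so that it descends.
  let π : (X →₀ A) →ₗ[A] X := Finsupp.linearCombination A id
  have hπ : Function.Surjective π := Finsupp.linearCombination_id_surjective A X
  let ι := (LinearMap.ker π).subtype
  have hιπ : Function.Exact ι π := π.exact_subtype_ker_map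
  obtain ⟨k, hk⟩ := Module.projective_lifting_property p (q ∘ₗ π) hp
  obtain ⟨g, hg⟩ := (exact_compRight ℤ (M := LinearMap.ker π) hi hip (k ∘ₗ ι)).1 <| by
    rw [LinearMap.compRight_apply, ← LinearMap.comp_assoc, hk]
    exact LinearMap.ext fun x => by simp [hιπ.apply_apply_eq_zero x]
  obtain ⟨h, hh⟩ := h _ π hπ g
  obtain ⟨t, ht⟩ := (exact_lcomp ℤ (X' := LinearMap.ker π) hιπ hπ (k - i ∘ₗ h)).1 <| by
    rw [LinearMap.lcomp_apply', LinearMap.sub_comp, ← hg, ← hh]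
    exact sub_self _
  refine ⟨t, LinearMap.ext fun x => ?_⟩
  obtain ⟨y, rfl⟩ := hπ x
  have hty : t (π y) = k y - i (h y) := LinearMap.congr_fun ht y
  simpa [hty, hip.apply_apply_eq_zero] using LinearMap.congr_fun hk y

end ExtOneVanishes

end ExtOne

section ExtVanish

variable {A X M : Type} [Ring A] [AddCommGroup X] [Module A X] [AddCommGroup M] [Module A M]

lemma extVanish.exists_comp_eq (h : extVanish A X M 1)
    (P : ProjectiveResolution (ModuleCat.of A X)) (x : P.complex.X 1 ⟶ ModuleCat.of A M)
    (hx : P.complex.d 2 1 ≫ x = 0) :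
    ∃ y : P.complex.X 0 ⟶ ModuleCat.of A M, P.complex.d 1 0 ≫ y = x := by
  have hz : Limits.IsZero ((P.complex.linearYonedaObj ℤ (ModuleCat.of A M)).homology 1) := by
    refine Limits.IsZero.of_iso ?_ (P.isoExt (R := ℤ) 1 (ModuleCat.of A M)).symm
    rw [extVanish] at h
    exact ModuleCat.isZero_of_subsingleton _
  rw [← HomologicalComplex.exactAt_iff_isZero_homology,
    HomologicalComplex.exactAt_iff' _ 0 1 2 (by simp) (by simp),
    ShortComplex.moduleCat_exact_iff] at hz
  exact hz x hx

lemma extVanish.extOneVanishes (h : extVanish A X M 1) : ExtOneVanishes A X M := by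
  let P := projectiveResolution (ModuleCat.of A X)
  let d := (P.complex.d 1 0).hom
  let ε := (P.π.f 0).hom
  have : Module.Projective A (P.complex.X 0) := (IsProjective.iff_projective _).2 (P.projective 0)
  have hε : Function.Surjective ε := (ModuleCat.epi_iff_surjective _).1 inferInstance
  have hdε : Function.Exact d ε := (ShortComplex.ShortExact.moduleCat_exact_iff_function_exact _).1
    P.exact₀
  refine ExtOneVanishes.of_presentation ε hε fun g => ?_
  let d' : P.complex.X 1 →ₗ[A] LinearMap.ker ε := d.codRestrict _ hdε.apply_apply_eq_zero
  obtain ⟨y, hy⟩ := h.exists_comp_eq P (ModuleCat.ofHom (g ∘ₗ d')) <| by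
    ext t
    have : d' ((P.complex.d 2 1).hom t) = 0 :=
      Subtype.ext (LinearMap.congr_fun (congrArg ModuleCat.Hom.hom (P.complex.d_comp_d 2 1 0)) t)
    exact (congrArg g this).trans (map_zero g)
  refine ⟨y.hom, LinearMap.ext fun ⟨x, hx⟩ => ?_⟩
  obtain ⟨z, rfl⟩ := (hdε x).1 hx
  exact LinearMap.congr_fun (congrArg ModuleCat.Hom.hom hy) z

end ExtVanish

section TensorHom

variable (R A D U M : Type*) [CommRing R] [Ring A] [Algebra R A]
  [AddCommGroup D] [Module R D] [Module A D] [IsScalarTower R A D] [AddCommGroup U] [Module R U]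
  [AddCommGroup M] [Module R M] [Module A M] [IsScalarTower R A M]

/-- Tensor-hom adjunction `Hom_A(D ⊗ U, M) ≃ Hom_R(U, Hom_A(D, M))`. -/
noncomputable def tensorHomEquiv : (D ⊗[R] U →ₗ[A] M) ≃ₗ[R] (U →ₗ[R] D →ₗ[A] M) :=
  (TensorProduct.AlgebraTensorModule.lift.equiv R A R D U M).symm ≪≫ₗ LinearMap.lflip

variable {R A D U M}

@[simp] lemma tensorHomEquiv_apply (f : D ⊗[R] U →ₗ[A] M) (u : U) (d : D) :
    tensorHomEquiv R A D U M f u d = f (d ⊗ₜ u) := rfl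

lemma tensor_hom_eq_zero (h : ∀ f : D →ₗ[A] M, f = 0) (f : D ⊗[R] U →ₗ[A] M) : f = 0 :=
  TensorProduct.AlgebraTensorModule.ext fun d u =>
    LinearMap.congr_fun (h (tensorHomEquiv R A D U M f u)) d

/-- Contraction of `D ⊗ U` along a functional on `U`. -/
noncomputable def tensorContract (A D : Type*) [Ring A] [Algebra R A] [AddCommGroup D] [Module R D]
    [Module A D] [IsScalarTower R A D] (φ : U →ₗ[R] R) : D ⊗[R] U →ₗ[A] D :=
  (TensorProduct.AlgebraTensorModule.rid R A D).toLinearMap ∘ₗ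
    TensorProduct.AlgebraTensorModule.lTensor A D φ

@[simp] lemma tensorContract_tmul (φ : U →ₗ[R] R) (d : D) (u : U) :
    tensorContract A D φ (d ⊗ₜ u) = φ u • d := by
  simp [tensorContract]

lemma sum_tensorContract_tmul {n : ℕ} {a : Fin n → U →ₗ[R] R} {b : Fin n → U}
    (hab : ∀ u, ∑ k, a k u • b k = u) (t : D ⊗[R] U) :
    ∑ k, tensorContract A D (a k) t ⊗ₜ[R] b k = t := by
  induction t with
  | zero => simp
  | tmul d u =>
    conv_rhs => rw [← hab u, TensorProduct.tmul_sum]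
    simp [TensorProduct.smul_tmul]
  | add s t hs ht =>
    conv_rhs => rw [← hs, ← ht]
    simp [TensorProduct.add_tmul, Finset.sum_add_distrib]

lemma hom_tensor_eq_zero {Y : Type*} [AddCommGroup Y] [Module A Y] (hU : IsFinProj R U)
    (h : ∀ f : Y →ₗ[A] D, f = 0) (f : Y →ₗ[A] D ⊗[R] U) : f = 0 := by
  obtain ⟨n, a, b, hab⟩ := hU.exists_dual_basis
  ext y
  have hzero : ∀ k, tensorContract A D (a k) (f y) = 0 := fun k =>
    LinearMap.congr_fun (h (tensorContract A D (a k) ∘ₗ f)) y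
  rw [← sum_tensorContract_tmul (A := A) hab (f y)]
  simp [hzero]

variable (R A) in
/-- The evaluation map `D ⊗ Hom_A(D, M) → M`. -/
noncomputable def evalTensor (D M : Type*) [AddCommGroup D] [Module R D] [Module A D]
    [IsScalarTower R A D] [AddCommGroup M] [Module R M] [Module A M] [IsScalarTower R A M] :
    D ⊗[R] (D →ₗ[A] M) →ₗ[A] M := (tensorHomEquiv R A D _ M).symm LinearMap.id

@[simp] lemma evalTensor_tmul (d : D) (f : D →ₗ[A] M) : evalTensor R A D M (d ⊗ₜ f) = f d := rfl

lemma evalTensor_naturality {N : Type*} [AddCommGroup N] [Module R N] [Module A N]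
    [IsScalarTower R A N] (i : M →ₗ[A] N) (t : D ⊗[R] (D →ₗ[A] M)) :
    evalTensor R A D N ((LinearMap.compRight R i).lTensor D t) = i (evalTensor R A D M t) := by
  induction t with
  | zero => simp
  | tmul d u => simp
  | add s t hs ht => simp [hs, ht]

lemma bijective_unit_of_bijective_algebraMap (hU : IsFinProj R U)
    (hD : Function.Bijective (algebraMap R (Module.End A D))) :
    Function.Bijective (tensorHomEquiv R A D U (D ⊗[R] U) LinearMap.id) := by
  obtain ⟨n, a, b, hab⟩ := hU.exists_dual_basis
  constructor
  · rw [injective_iff_map_eq_zero]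
    intro u hu
    have hau : ∀ k, a k u = 0 := fun k => (map_eq_zero_iff _ hD.1).1 <| LinearMap.ext fun d => by
      simpa using congrArg (tensorContract A D (a k)) (LinearMap.congr_fun hu d)
    rw [← hab u]
    simp [hau]
  · intro f
    choose r hr using fun k => hD.2 (tensorContract A D (a k) ∘ₗ f)
    refine ⟨∑ k, r k • b k, LinearMap.ext fun d => ?_⟩
    have hrd : ∀ k, r k • d = tensorContract A D (a k) (f d) := fun k =>
      LinearMap.congr_fun (hr k) d
    conv_rhs => rw [← sum_tensorContract_tmul (A := A) hab (f d)]
    simp [← hrd, TensorProduct.smul_tmul]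

lemma evalTensor_tensor_bijective (hU : IsFinProj R U)
    (hD : Function.Bijective (algebraMap R (Module.End A D))) :
    Function.Bijective (evalTensor R A D (D ⊗[R] U)) := by
  let e := LinearEquiv.ofBijective _ (bijective_unit_of_bijective_algebraMap hU hD)
  have hleft : ∀ t, evalTensor R A D (D ⊗[R] U) (e.lTensor D t) = t := fun t => by
    induction t with
    | zero => simp
    | tmul d u => rfl
    | add s t hs ht => simp only [map_add, hs, ht]
  have : ⇑(evalTensor R A D (D ⊗[R] U)) = (e.lTensor D).symm := by
    funext s
    obtain ⟨t, rfl⟩ := (e.lTensor D).surjective s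
    rw [hleft, LinearEquiv.symm_apply_apply]
  rw [this]
  exact (e.lTensor D).symm.bijective

lemma exact_tensor (U : Type*) [AddCommGroup U] [Module R U] {X' X X'' : Type*}
    [AddCommGroup X'] [Module R X'] [Module A X'] [IsScalarTower R A X']
    [AddCommGroup X] [Module R X] [Module A X] [IsScalarTower R A X]
    [AddCommGroup X''] [Module R X''] [Module A X''] [IsScalarTower R A X'']
    {i : X' →ₗ[A] X} {p : X →ₗ[A] X''} (hip : Function.Exact i p) (hp : Function.Surjective p) :
    Function.Exact (TensorProduct.AlgebraTensorModule.rTensor R U i)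
      (TensorProduct.AlgebraTensorModule.rTensor R U p) :=
  rTensor_exact U (f := i.restrictScalars R) (g := p.restrictScalars R) hip hp

end TensorHom

section TensorExt

variable {R A D U M : Type u} [CommRing R] [Ring A] [Algebra R A]
  [AddCommGroup D] [Module R D] [Module A D] [IsScalarTower R A D] [AddCommGroup U] [Module R U]
  [AddCommGroup M] [Module R M] [Module A M] [IsScalarTower R A M]

lemma ExtOneVanishes.tensor_of_presentation {P : Type u} [AddCommGroup P] [Module R P] [Module A P]
    [IsScalarTower R A P] [Module.Projective A P] [Module.Projective R U] (q : P →ₗ[A] D)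
    (hq : Function.Surjective q) (h : ExtOneVanishes A D M) : ExtOneVanishes A (D ⊗[R] U) M := by
  have hιq := exact_tensor (R := R) U q.exact_subtype_ker_map hq
  set ι := TensorProduct.AlgebraTensorModule.rTensor R U (LinearMap.ker q).subtype
  set qU := TensorProduct.AlgebraTensorModule.rTensor R U q
  have hqU : Function.Surjective qU :=
    LinearMap.rTensor_surjective U (g := q.restrictScalars R) hq
  refine of_presentation qU hqU fun g => ?_
  let j : LinearMap.ker q ⊗[R] U →ₗ[A] LinearMap.ker qU :=
    ι.codRestrict _ hιq.apply_apply_eq_zero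
  obtain ⟨F, hF⟩ := Module.projective_lifting_property
    (LinearMap.lcomp R M (LinearMap.ker q).subtype) (tensorHomEquiv R A _ U M (g ∘ₗ j)) (h _ q hq)
  have hgj : (tensorHomEquiv R A _ U M).symm F ∘ₗ ι = g ∘ₗ j :=
    TensorProduct.AlgebraTensorModule.ext fun x u =>
      LinearMap.congr_fun (LinearMap.congr_fun hF u) x
  refine ⟨(tensorHomEquiv R A _ U M).symm F, LinearMap.ext fun ⟨t, ht⟩ => ?_⟩
  obtain ⟨s, rfl⟩ := (hιq t).1 ht
  exact LinearMap.congr_fun hgj s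

lemma ExtOneVanishes.tensor [Module.Projective R U] (h : ExtOneVanishes A D M) :
    ExtOneVanishes A (D ⊗[R] U) M :=
  tensor_of_presentation (Finsupp.linearCombination A (id : D → D))
    (Finsupp.linearCombination_id_surjective A D) h

end TensorExt

section TensorFiltration

variable {R : Type} [CommRing R] {A : Type} [Ring A] [Algebra R A] {Λ : Type}
  {Δ : Λ → Type} [∀ l, AddCommGroup (Δ l)] [∀ l, Module R (Δ l)] [∀ l, Module A (Δ l)]
  [∀ l, IsScalarTower R A (Δ l)] {S : Set Λ}

variable (R A Δ S) in
/-- An inclusion of submodules whose quotient is of the form `Δ(l) ⊗ U`, with `l ∈ S` and `U`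
finitely generated projective. -/
def IsTensorStep {X : Type} [AddCommGroup X] [Module A X] (T T' : Submodule A X) : Prop :=
  T ≤ T' ∧ Nonempty (TensorFactor R A Λ Δ S (T' ⧸ T.comap T'.subtype))

variable (R A Δ S) in
/-- `X` has a finite filtration with factors `Δ(l) ⊗ U`, `l ∈ S`; this is `InFilt` without the
finite generation of `X`. -/
def HasTensorFiltration (X : Type) [AddCommGroup X] [Module A X] : Prop :=
  Relation.ReflTransGen (IsTensorStep R A Δ S) (⊥ : Submodule A X) ⊤

lemma IsTensorStep.of_surjective {X Y : Type} [AddCommGroup X] [Module A X] [AddCommGroup Y]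
    [Module A Y] {K K' : Submodule A X} {T T' : Submodule A Y} (hT : IsTensorStep R A Δ S T T')
    (hle : K ≤ K') (f : K' →ₗ[A] T') (hf : Function.Surjective f)
    (hK : ∀ x, (f x : Y) ∈ T ↔ (x : X) ∈ K) : IsTensorStep R A Δ S K K' := by
  obtain ⟨-, ⟨F⟩⟩ := hT
  have hker : K.comap K'.subtype = LinearMap.ker ((T.comap T'.subtype).mkQ ∘ₗ f) := by
    ext x
    simp [hK]
  refine ⟨hle, ⟨⟨F.lam, F.mem, F.U, F.fin, F.proj, ?_⟩⟩⟩
  exact Submodule.quotEquivOfEq _ _ hker ≪≫ₗ LinearMap.quotKerEquivOfSurjective _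
    ((Submodule.mkQ_surjective _).comp hf) ≪≫ₗ F.iso

lemma IsTensorStep.map {X Y : Type} [AddCommGroup X] [Module A X] [AddCommGroup Y] [Module A Y]
    {T T' : Submodule A X} (hT : IsTensorStep R A Δ S T T') {i : X →ₗ[A] Y}
    (hi : Function.Injective i) : IsTensorStep R A Δ S (T.map i) (T'.map i) := by
  let e := Submodule.equivMapOfInjective i hi T'
  refine hT.of_surjective (Submodule.map_mono hT.1) e.symm.toLinearMap e.symm.surjective fun y => ?_
  obtain ⟨x, rfl⟩ := e.surjective y
  simp [e, hi.eq_iff]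

lemma IsTensorStep.comap {X Y : Type} [AddCommGroup X] [Module A X] [AddCommGroup Y] [Module A Y]
    {T T' : Submodule A Y} (hT : IsTensorStep R A Δ S T T') {p : X →ₗ[A] Y}
    (hp : Function.Surjective p) : IsTensorStep R A Δ S (T.comap p) (T'.comap p) := by
  refine hT.of_surjective (Submodule.comap_mono hT.1) (p.restrict fun _ hx => hx) ?_
    fun _ => Iff.rfl
  rintro ⟨y, hy⟩
  obtain ⟨x, rfl⟩ := hp y
  exact ⟨⟨x, hy⟩, rfl⟩

namespace HasTensorFiltration

variable {X : Type} [AddCommGroup X] [Module A X]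

lemma of_subsingleton [Subsingleton X] : HasTensorFiltration R A Δ S X := by
  rw [HasTensorFiltration, Subsingleton.elim ⊤ ⊥]

lemma mono {S' : Set Λ} (h : HasTensorFiltration R A Δ S X) (hS : S ⊆ S') :
    HasTensorFiltration R A Δ S' X :=
  Relation.ReflTransGen.mono (fun _ _ ⟨hle, ⟨F⟩⟩ =>
    ⟨hle, ⟨⟨F.lam, hS F.mem, F.U, F.fin, F.proj, F.iso⟩⟩⟩) _ _ h

lemma of_exact {X' X'' : Type} [AddCommGroup X'] [Module A X'] [AddCommGroup X''] [Module A X'']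
    {i : X' →ₗ[A] X} {p : X →ₗ[A] X''} (hi : Function.Injective i) (hip : Function.Exact i p)
    (hp : Function.Surjective p) (h' : HasTensorFiltration R A Δ S X')
    (h'' : HasTensorFiltration R A Δ S X'') : HasTensorFiltration R A Δ S X := by
  have h₁ : Relation.ReflTransGen (IsTensorStep R A Δ S) (Submodule.map i ⊥) (Submodule.map i ⊤) :=
    h'.lift (Submodule.map i) fun _ _ hT => hT.map hi
  have h₂ : Relation.ReflTransGen (IsTensorStep R A Δ S) (Submodule.comap p ⊥)
      (Submodule.comap p ⊤) := h''.lift (Submodule.comap p) fun _ _ hT => hT.comap hp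
  rw [Submodule.map_bot, Submodule.map_top, ← hip.linearMap_ker_eq] at h₁
  exact h₁.trans h₂

lemma of_equiv {Y : Type} [AddCommGroup Y] [Module A Y] (h : HasTensorFiltration R A Δ S X)
    (e : X ≃ₗ[A] Y) : HasTensorFiltration R A Δ S Y :=
  of_exact (p := (⊤ : Submodule A Y).mkQ) e.injective
    (fun y => by simp) (Submodule.mkQ_surjective _) h of_subsingleton

lemma of_tensorFactor (F : TensorFactor R A Λ Δ S X) : HasTensorFiltration R A Δ S X := by
  refine .single ⟨bot_le, ⟨⟨F.lam, F.mem, F.U, F.fin, F.proj, ?_⟩⟩⟩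
  exact Submodule.quotEquivOfEqBot _ (by ext; simp) ≪≫ₗ Submodule.topEquiv ≪≫ₗ F.iso

lemma prod {Y : Type} [AddCommGroup Y] [Module A Y] (hX : HasTensorFiltration R A Δ S X)
    (hY : HasTensorFiltration R A Δ S Y) : HasTensorFiltration R A Δ S (X × Y) :=
  of_exact LinearMap.inl_injective (Function.Exact.inl_snd (R := A)) LinearMap.snd_surjective hX hY

lemma pi {ι : Type} [Finite ι] (Y : ι → Type) [∀ i, AddCommGroup (Y i)] [∀ i, Module A (Y i)]
    (hY : ∀ i, HasTensorFiltration R A Δ S (Y i)) : HasTensorFiltration R A Δ S (∀ i, Y i) := by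
  revert Y
  refine Finite.induction_empty_option (P := fun ι => ∀ (Y : ι → Type) [∀ i, AddCommGroup (Y i)]
    [∀ i, Module A (Y i)], (∀ i, HasTensorFiltration R A Δ S (Y i)) →
    HasTensorFiltration R A Δ S (∀ i, Y i)) ?_ ?_ ?_ ι
  · intro α β e ih Y _ _ hY
    exact (ih (fun a => Y (e a)) fun a => hY (e a)).of_equiv (LinearEquiv.piCongrLeft A Y e)
  · intro Y _ _ _
    exact of_subsingleton
  · intro α _ ih Y _ _ hY
    exact ((hY none).prod (ih (fun a => Y (some a)) fun a => hY (some a))).of_equiv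
      (LinearEquiv.piOptionEquivProd A).symm

lemma inFilt [Module.Finite A X] (h : HasTensorFiltration R A Δ S X) : InFilt R A Λ Δ S X := by
  refine ⟨inferInstance, ?_⟩
  unfold HasTensorFiltration at h
  generalize (⊤ : Submodule A X) = T at h
  induction h with
  | refl => exact ⟨0, fun _ => ⊥, rfl, rfl, monotone_const, fun i => i.elim0⟩
  | @tail T T' _ hTT' ih =>
    obtain ⟨n, c, h0, hn, hc, hF⟩ := ih
    let c' : Fin (n + 2) → Submodule A X := Fin.snoc c T'
    have hstep : ∀ i : Fin (n + 1), IsTensorStep R A Δ S (c' i.castSucc) (c' i.succ) := by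
      intro i
      induction i using Fin.lastCases with
      | last => simpa only [c', Fin.succ_last, Fin.snoc_last, Fin.snoc_castSucc, hn] using hTT'
      | cast i =>
        simpa only [c', Fin.succ_castSucc, Fin.snoc_castSucc] using
          ⟨hc (Fin.castSucc_le_succ i), hF i⟩
    refine ⟨n + 1, c', ?_, Fin.snoc_last _ _, Fin.monotone_iff_le_succ.2 fun i => (hstep i).1,
      fun i => (hstep i).2⟩
    rw [← h0]
    exact Fin.snoc_castSucc (α := fun _ => Submodule A X) T' c 0

end HasTensorFiltration

lemma InFilt.hasTensorFiltration {X : Type} [AddCommGroup X] [Module A X]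
    (h : InFilt R A Λ Δ S X) : HasTensorFiltration R A Δ S X := by
  obtain ⟨-, n, c, h0, hn, hc, hF⟩ := h
  have hreach : ∀ i, Relation.ReflTransGen (IsTensorStep R A Δ S) (c 0) (c i) := fun i => by
    induction i using Fin.induction with
    | zero => exact .refl
    | succ i ih => exact ih.tail ⟨hc (Fin.castSucc_le_succ i), hF i⟩
  simpa only [HasTensorFiltration, h0, hn] using hreach (Fin.last n)

section Induction

variable {X : Type} [AddCommGroup X] [Module R X] [Module A X] [IsScalarTower R A X]

namespace HasTensorFiltration

lemma induction
    {Q : ∀ (X : Type) [AddCommGroup X] [Module R X] [Module A X] [IsScalarTower R A X], Prop}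
    (zero : ∀ (X : Type) [AddCommGroup X] [Module R X] [Module A X] [IsScalarTower R A X]
      [Subsingleton X], Q X)
    (exact : ∀ (X' X X'' : Type) [AddCommGroup X'] [Module R X'] [Module A X']
      [IsScalarTower R A X'] [AddCommGroup X] [Module R X] [Module A X] [IsScalarTower R A X]
      [AddCommGroup X''] [Module R X''] [Module A X''] [IsScalarTower R A X'']
      (i : X' →ₗ[A] X) (p : X →ₗ[A] X''), Function.Injective i → Function.Exact i p →
      Function.Surjective p → Q X' → Q X'' → Q X)
    (tensor : ∀ l ∈ S, ∀ (U : Type) [AddCommGroup U] [Module R U], IsFinProj R U →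
      Q (Δ l ⊗[R] U))
    (hX : HasTensorFiltration R A Δ S X) : Q X := by
  suffices ∀ T : Submodule A X, Relation.ReflTransGen (IsTensorStep R A Δ S) ⊥ T → Q T from
    exact _ _ _ (⊤ : Submodule A X).subtype (⊤ : Submodule A X).mkQ (Submodule.subtype_injective _)
      (LinearMap.exact_subtype_mkQ _) (Submodule.mkQ_surjective _) (this ⊤ hX) (zero _)
  intro T hT
  induction hT with
  | refl => exact zero _
  | @tail T T' _ hTT' ih =>
    obtain ⟨hle, ⟨F⟩⟩ := hTT'
    have hexact : Function.Exact (Submodule.inclusion hle)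
        (F.iso.toLinearMap ∘ₗ (T.comap T'.subtype).mkQ) := fun x => by
      simp [Submodule.inclusion, Subtype.ext_iff]
    exact exact _ _ _ (Submodule.inclusion hle) _ (Submodule.inclusion_injective hle) hexact
      (F.iso.surjective.comp (Submodule.mkQ_surjective _)) ih
      (tensor F.lam F.mem F.U ⟨F.fin, F.proj⟩)

variable {N : Type} [AddCommGroup N] [Module R N] [Module A N] [IsScalarTower R A N]

lemma hom_eq_zero (hX : HasTensorFiltration R A Δ S X)
    (hN : ∀ l ∈ S, ∀ f : Δ l →ₗ[A] N, f = 0) (f : X →ₗ[A] N) : f = 0 := by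
  refine hX.induction (Q := fun X => ∀ f : X →ₗ[A] N, f = 0) ?_ ?_ ?_ f
  · exact fun X _ _ _ _ _ f => Subsingleton.elim f 0
  · intro X' X X'' _ _ _ _ _ _ _ _ _ _ _ _ i p _ hip hp h' h'' f
    obtain ⟨g, rfl⟩ := (exact_lcomp ℤ hip hp f).1 (h' _)
    rw [h'' g, map_zero]
  · exact fun l hl U _ _ _ => tensor_hom_eq_zero (hN l hl)

lemma extOneVanishes (hX : HasTensorFiltration R A Δ S X)
    (hN : ∀ l ∈ S, ExtOneVanishes A (Δ l) N) : ExtOneVanishes A X N := by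
  refine hX.induction (Q := fun X => ExtOneVanishes A X N) ?_ ?_ ?_
  · exact fun X _ _ _ _ _ => .of_subsingleton
  · exact fun X' X X'' _ _ _ _ _ _ _ _ _ _ _ _ i p hi hip hp => .of_exact hi hip hp
  · intro l hl U _ _ hU
    have := hU.projective
    exact (hN l hl).tensor

lemma isFinProj_hom (hX : HasTensorFiltration R A Δ S X)
    (hN : ∀ l ∈ S, ExtOneVanishes A (Δ l) N) (hN' : ∀ l ∈ S, IsFinProj R (Δ l →ₗ[A] N)) :
    IsFinProj R (X →ₗ[A] N) := by
  refine (hX.induction (Q := fun X => ExtOneVanishes A X N ∧ IsFinProj R (X →ₗ[A] N))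
    ?_ ?_ ?_).2
  · exact fun X _ _ _ _ _ => ⟨.of_subsingleton, .of_subsingleton⟩
  · intro X' X X'' _ _ _ _ _ _ _ _ _ _ _ _ i p hi hip hp h' h''
    exact ⟨.of_exact hi hip hp h'.1 h''.1, .of_exact (LinearMap.lcomp_injective_of_surjective _ hp)
      (exact_lcomp R hip hp) (h''.1.lcomp_surjective hi hip R hp) h''.2 h'.2⟩
  · intro l hl U _ _ hU
    have := hU.projective
    exact ⟨(hN l hl).tensor, (hU.linearMap (hN' l hl)).of_equiv (tensorHomEquiv R A _ U N)⟩

end HasTensorFiltration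

end Induction

end TensorFiltration

section QuotientExact

variable {A X X' X'' : Type*} [Ring A] [AddCommGroup X] [Module A X] [AddCommGroup X'] [Module A X']
  [AddCommGroup X''] [Module A X''] {i : X' →ₗ[A] X} {p : X →ₗ[A] X''}

lemma exists_exact_quotient (hip : Function.Exact i p) (hp : Function.Surjective p)
    {K : Submodule A X} {K' : Submodule A X'} {K'' : Submodule A X''} (hK' : K.comap i = K')
    (hK'' : K.map p = K'') :
    ∃ (i₁ : X' ⧸ K' →ₗ[A] X ⧸ K) (p₁ : X ⧸ K →ₗ[A] X'' ⧸ K''),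
      Function.Injective i₁ ∧ Function.Exact i₁ p₁ ∧ Function.Surjective p₁ := by
  subst hK' hK''
  refine ⟨Submodule.mapQ _ K i le_rfl, Submodule.mapQ K _ p (Submodule.le_comap_map p K), ?_,
    (hip.exact_mapQ_iff _ _).2 inf_le_right, ?_⟩
  · rw [← LinearMap.ker_eq_bot, Submodule.ker_mapQ, Submodule.mkQ_map_self]
  · rw [← LinearMap.range_eq_top, Submodule.range_mapQ, LinearMap.range_eq_top.2 hp,
      Submodule.map_top, Submodule.range_mkQ]

end QuotientExact

section EvalTensorExact

variable {R A D X X' X'' : Type*} [CommRing R] [Ring A] [Algebra R A]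
  [AddCommGroup D] [Module R D] [Module A D] [IsScalarTower R A D]
  [AddCommGroup X] [Module R X] [Module A X] [IsScalarTower R A X]
  [AddCommGroup X'] [Module R X'] [Module A X'] [IsScalarTower R A X']
  [AddCommGroup X''] [Module R X''] [Module A X''] [IsScalarTower R A X'']
  {i : X' →ₗ[A] X} {p : X →ₗ[A] X''}

lemma map_range_evalTensor_le (f : X →ₗ[A] X'') :
    (LinearMap.range (evalTensor R A D X)).map f ≤ LinearMap.range (evalTensor R A D X'') := by
  rintro _ ⟨_, ⟨t, rfl⟩, rfl⟩
  exact ⟨_, evalTensor_naturality f t⟩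

lemma map_range_evalTensor (hlift : Function.Surjective (LinearMap.compRight R (M := D) p)) :
    (LinearMap.range (evalTensor R A D X)).map p = LinearMap.range (evalTensor R A D X'') := by
  refine (map_range_evalTensor_le p).antisymm ?_
  rintro _ ⟨t, rfl⟩
  obtain ⟨t, rfl⟩ := LinearMap.lTensor_surjective D hlift t
  exact ⟨_, ⟨t, rfl⟩, (evalTensor_naturality p t).symm⟩

variable (hi : Function.Injective i) (hip : Function.Exact i p)
  (hlift : Function.Surjective (LinearMap.compRight R (M := D) p))
  (h'' : Function.Injective (evalTensor R A D X''))

include hi hip hlift h''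

lemma exists_lTensor_eq_of_evalTensor_mem_range {t : D ⊗[R] (D →ₗ[A] X)}
    (ht : evalTensor R A D X t ∈ LinearMap.range i) :
    ∃ t', (LinearMap.compRight R i).lTensor D t' = t := by
  have hp : p (evalTensor R A D X t) = 0 := (hip _).2 ht
  rw [← evalTensor_naturality, map_eq_zero_iff _ h''] at hp
  exact (lTensor_exact D (exact_compRight R hi hip) hlift t).1 hp

lemma comap_range_evalTensor :
    (LinearMap.range (evalTensor R A D X)).comap i = LinearMap.range (evalTensor R A D X') := by
  refine le_antisymm ?_ (Submodule.map_le_iff_le_comap.1 (map_range_evalTensor_le i))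
  rintro x ⟨t, ht⟩
  obtain ⟨t', rfl⟩ := exists_lTensor_eq_of_evalTensor_mem_range hi hip hlift h'' ⟨x, ht.symm⟩
  rw [evalTensor_naturality] at ht
  exact ⟨t', hi ht⟩

lemma evalTensor_injective_of_exact (h' : Function.Injective (evalTensor R A D X')) :
    Function.Injective (evalTensor R A D X) := by
  rw [injective_iff_map_eq_zero]
  intro t ht
  obtain ⟨t', rfl⟩ := exists_lTensor_eq_of_evalTensor_mem_range hi hip hlift h''
    (t := t) (ht ▸ zero_mem _)
  rw [evalTensor_naturality, map_eq_zero_iff i hi, map_eq_zero_iff _ h'] at ht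
  rw [ht, map_zero]

end EvalTensorExact

lemma evalTensor_injective_of_retract {R A D X Y : Type*} [CommRing R] [Ring A] [Algebra R A]
    [AddCommGroup D] [Module R D] [Module A D] [IsScalarTower R A D]
    [AddCommGroup X] [Module R X] [Module A X] [IsScalarTower R A X]
    [AddCommGroup Y] [Module R Y] [Module A Y] [IsScalarTower R A Y]
    (hY : Function.Injective (evalTensor R A D Y)) (i : X →ₗ[A] Y) (p : Y →ₗ[A] X)
    (hpi : p ∘ₗ i = LinearMap.id) : Function.Injective (evalTensor R A D X) := by
  have hleft : ∀ t, (LinearMap.compRight R p).lTensor D ((LinearMap.compRight R i).lTensor D t) =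
      t := fun t => by
    rw [← LinearMap.lTensor_comp_apply, show LinearMap.compRight R p ∘ₗ LinearMap.compRight R
      (M := D) i = LinearMap.id by ext f x; exact LinearMap.congr_fun hpi (f x),
      LinearMap.lTensor_id, LinearMap.id_apply]
  have hnat : ⇑i ∘ evalTensor R A D X =
      evalTensor R A D Y ∘ (LinearMap.compRight R i).lTensor D :=
    funext fun t => (evalTensor_naturality i t).symm
  exact .of_comp (f := i) (hnat ▸ hY.comp (Function.LeftInverse.injective hleft))

section TraceFiltration

variable {R : Type} [CommRing R] {A : Type} [Ring A] [Algebra R A] {Λ : Type}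
  {Δ : Λ → Type} [∀ l, AddCommGroup (Δ l)] [∀ l, Module R (Δ l)] [∀ l, Module A (Δ l)]
  [∀ l, IsScalarTower R A (Δ l)] {S : Set Λ} {L : List Λ}

variable (R A Δ) in
/-- The trace filtration along a list `L`: the submodules spanned by the images of all maps from
`Δ(l)`, taken successively for `l ∈ L`, have factors `Δ(l) ⊗ Hom(Δ(l), -)` with finitely generated
projective `Hom(Δ(l), -)`, and they exhaust `X`. -/
def HasTraceFiltration : List Λ → ∀ (X : Type) [AddCommGroup X] [Module R X] [Module A X]
    [IsScalarTower R A X], Prop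
  | [], X, _, _, _, _ => Subsingleton X
  | l :: L, X, _, _, _, _ => IsFinProj R (Δ l →ₗ[A] X) ∧
      Function.Injective (evalTensor R A (Δ l) X) ∧
      HasTraceFiltration L (X ⧸ LinearMap.range (evalTensor R A (Δ l) X))

namespace HasTraceFiltration

variable {X Y : Type} [AddCommGroup X] [Module R X] [Module A X] [IsScalarTower R A X]
  [AddCommGroup Y] [Module R Y] [Module A Y] [IsScalarTower R A Y]

lemma of_retract (hY : HasTraceFiltration R A Δ L Y) (i : X →ₗ[A] Y) (p : Y →ₗ[A] X)
    (hpi : p ∘ₗ i = LinearMap.id) : HasTraceFiltration R A Δ L X := by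
  induction L generalizing X Y with
  | nil =>
    have : Subsingleton Y := hY
    exact (Function.LeftInverse.injective (f := i) (g := p) (LinearMap.congr_fun hpi)).subsingleton
  | cons l L ih =>
    obtain ⟨hproj, hinj, hquot⟩ := hY
    refine ⟨hproj.of_retract (LinearMap.compRight R i) (LinearMap.compRight R p) ?_,
      evalTensor_injective_of_retract hinj i p hpi, ih hquot
        (Submodule.mapQ _ _ i (Submodule.map_le_iff_le_comap.1 (map_range_evalTensor_le i)))
        (Submodule.mapQ _ _ p (Submodule.map_le_iff_le_comap.1 (map_range_evalTensor_le p))) ?_⟩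
    · ext f x
      exact LinearMap.congr_fun hpi (f x)
    · ext x
      exact congrArg _ (LinearMap.congr_fun hpi x)

lemma of_equiv (hY : HasTraceFiltration R A Δ L Y) (e : X ≃ₗ[A] Y) :
    HasTraceFiltration R A Δ L X :=
  hY.of_retract e.toLinearMap e.symm.toLinearMap (by ext; simp)

lemma of_subsingleton [Subsingleton X] : HasTraceFiltration R A Δ L X := by
  induction L generalizing X with
  | nil => assumption
  | cons l L ih =>
    exact ⟨.of_subsingleton, Function.injective_of_subsingleton _, ih⟩

lemma cons_of_hom_eq_zero {l : Λ} (hX : ∀ f : Δ l →ₗ[A] X, f = 0)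
    (h : HasTraceFiltration R A Δ L X) : HasTraceFiltration R A Δ (l :: L) X := by
  have : Subsingleton (Δ l →ₗ[A] X) := ⟨fun f g => (hX f).trans (hX g).symm⟩
  have hrange : LinearMap.range (evalTensor R A (Δ l) X) = ⊥ :=
    LinearMap.range_eq_bot.2 (Subsingleton.elim _ _)
  exact ⟨.of_subsingleton, Function.injective_of_subsingleton _,
    h.of_equiv (Submodule.quotEquivOfEqBot _ hrange)⟩

lemma hasTensorFiltration (hX : HasTraceFiltration R A Δ L X) (hS : ∀ l ∈ L, l ∈ S) :
    HasTensorFiltration R A Δ S X := by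
  induction L generalizing X with
  | nil =>
    have : Subsingleton X := hX
    exact .of_subsingleton
  | cons l L ih =>
    obtain ⟨hproj, hinj, hquot⟩ := hX
    exact .of_exact hinj (LinearMap.exact_map_mkQ_range _) (Submodule.mkQ_surjective _)
      (.of_tensorFactor ⟨l, hS l (by simp), ModuleCat.of R _, hproj.1, hproj.2, .refl _ _⟩)
      (ih hquot fun m hm => hS m (by simp [hm]))

end HasTraceFiltration

end TraceFiltration

lemma exists_list_pairwise_not_le (Λ : Type*) [Finite Λ] [PartialOrder Λ] :
    ∃ L : List Λ, L.Pairwise (¬ · ≤ ·) ∧ ∀ l, l ∈ L := by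
  classical
  have := Fintype.ofFinite Λ
  obtain ⟨s, _, hs⟩ := extend_partialOrder (α := Λ) (· ≥ ·)
  refine ⟨Finset.univ.sort s, ?_, by simp⟩
  exact ((Finset.pairwise_sort Finset.univ s).and (Finset.sort_nodup _ _)).imp
    fun ⟨hab, hne⟩ hle => hne (antisymm hab (hs _ _ hle))

lemma IsFinProj.hom_of_projective {R A P N : Type*} [CommRing R] [Ring A] [Algebra R A]
    [AddCommGroup P] [Module A P] [Module.Finite A P] [Module.Projective A P]
    [AddCommGroup N] [Module R N] [Module A N] [IsScalarTower R A N] (hN : IsFinProj R N) :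
    IsFinProj R (P →ₗ[A] N) := by
  obtain ⟨n, q, s, -, -, hqs⟩ := Module.Finite.exists_comp_eq_id_of_projective A P
  have hpow : IsFinProj R (Fin n → N) :=
    (linearMap (V := Fin n → R) ⟨inferInstance, inferInstance⟩ hN).of_equiv
      (Module.piEquiv (Fin n) R N)
  have hfree : IsFinProj R ((Fin n → A) →ₗ[A] N) :=
    hpow.of_equiv ((Pi.basisFun A (Fin n)).constr R).symm
  refine hfree.of_retract (LinearMap.lcomp R N q) (LinearMap.lcomp R N s) ?_
  ext f x
  exact congrArg f (LinearMap.congr_fun hqs x)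

namespace SplitQH

variable {R : Type} [CommRing R] {A : Type} [Ring A] [Algebra R A] {Λ : Type} [PartialOrder Λ]
  {Δ : Λ → Type} [∀ l, AddCommGroup (Δ l)] [∀ l, Module R (Δ l)] [∀ l, Module A (Δ l)]
  [∀ l, IsScalarTower R A (Δ l)]

section Basic

variable (h : SplitQH R A Λ Δ)

include h in
lemma isFinProj_standard (l : Λ) : IsFinProj R (Δ l) := ⟨h.deltaFinR l, h.deltaProjR l⟩

include h in
lemma standard_hom_eq_zero {l m : Λ} (hlm : ¬ l ≤ m) (f : Δ l →ₗ[A] Δ m) : f = 0 :=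
  not_not.1 fun hf => hlm (h.hom_le l m ⟨f, hf⟩)

include h in
lemma bijective_algebraMap_end (l : Λ) :
    Function.Bijective (algebraMap R (Module.End A (Δ l))) := by
  obtain ⟨e⟩ := h.endIso l
  have he : ⇑(algebraMap R (Module.End A (Δ l))) = e.symm :=
    funext fun r => (e.symm.commutes r).symm
  exact he ▸ e.symm.bijective

noncomputable instance (l : Λ) : Module R (h.P l) := Module.compHom _ (algebraMap R A)

instance (l : Λ) : IsScalarTower R A (h.P l) := .of_algebraMap_smul fun _ _ => rfl

end Basic

/-- `X` is supported on the list `L` of weights: the only composition factors it may have are tops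
of projectives `P(m)` with `m ∈ L`, so `P(m)` has no nonzero map to `X` for `m ∉ L`. -/
def IsSupported (h : SplitQH R A Λ Δ) (L : List Λ) (X : Type) [AddCommGroup X] [Module A X] :
    Prop :=
  ∀ m ∉ L, ∀ f : h.P m →ₗ[A] X, f = 0

namespace IsSupported

variable {h : SplitQH R A Λ Δ} {X : Type} [AddCommGroup X] [Module R X] [Module A X]
  [IsScalarTower R A X] {l : Λ} {L : List Λ} (hL : (l :: L).Pairwise (¬ · ≤ ·))
  (hX : h.IsSupported (l :: L) X)

include hL hX

lemma ker_epi_hom_eq_zero (f : LinearMap.ker (h.epi l) →ₗ[A] X) : f = 0 := by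
  refine (h.ker_filt l).hasTensorFiltration.hom_eq_zero (fun m hm g => ?_) f
  have hmem : m ∉ l :: L := by
    rw [List.mem_cons, not_or]
    exact ⟨ne_of_gt hm, fun hmL => (List.pairwise_cons.1 hL).1 m hmL (le_of_lt hm)⟩
  have hcomp := hX m hmem (g ∘ₗ h.epi m)
  rwa [← LinearMap.zero_comp (h.epi m), LinearMap.cancel_right (h.epi_surj m)] at hcomp

lemma exists_comp_epi_eq (g : h.P l →ₗ[A] X) : ∃ f : Δ l →ₗ[A] X, f ∘ₗ h.epi l = g :=
  (exact_lcomp ℤ (h.epi l).exact_subtype_ker_map (h.epi_surj l) g).1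
    (hX.ker_epi_hom_eq_zero hL _)

lemma compRight_surjective {Y : Type} [AddCommGroup Y] [Module R Y] [Module A Y]
    [IsScalarTower R A Y] {p : X →ₗ[A] Y} (hp : Function.Surjective p) :
    Function.Surjective (LinearMap.compRight R (M := Δ l) p) := by
  intro g
  have := h.P_proj l
  obtain ⟨k, hk⟩ := Module.projective_lifting_property p (g ∘ₗ h.epi l) hp
  obtain ⟨f, rfl⟩ := hX.exists_comp_epi_eq hL k
  exact ⟨f, (LinearMap.cancel_right (h.epi_surj l)).1 hk⟩

lemma quotient : h.IsSupported L (X ⧸ LinearMap.range (evalTensor R A (Δ l) X)) := by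
  intro m hm f
  have := h.P_proj m
  obtain ⟨k, rfl⟩ := Module.projective_lifting_property _ f
    (LinearMap.range (evalTensor R A (Δ l) X)).mkQ_surjective
  by_cases hml : m = l
  · subst hml
    obtain ⟨g, rfl⟩ := hX.exists_comp_epi_eq hL k
    ext x
    exact (Submodule.Quotient.mk_eq_zero _).2 ⟨h.epi m x ⊗ₜ g, rfl⟩
  · rw [hX m (by simp [hml, hm]) k, LinearMap.comp_zero]

end IsSupported

lemma hasTraceFiltration_of_exact {h : SplitQH R A Λ Δ} {L : List Λ}
    {X X' X'' : Type} [AddCommGroup X] [Module R X] [Module A X] [IsScalarTower R A X]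
    [AddCommGroup X'] [Module R X'] [Module A X'] [IsScalarTower R A X']
    [AddCommGroup X''] [Module R X''] [Module A X''] [IsScalarTower R A X'']
    {i : X' →ₗ[A] X} {p : X →ₗ[A] X''} (hL : L.Pairwise (¬ · ≤ ·)) (hX : h.IsSupported L X)
    (hi : Function.Injective i) (hip : Function.Exact i p) (hp : Function.Surjective p)
    (h' : HasTraceFiltration R A Δ L X') (h'' : HasTraceFiltration R A Δ L X'') :
    HasTraceFiltration R A Δ L X := by
  induction L generalizing X X' X'' with
  | nil =>
    have : Subsingleton X' := h'
    have : Subsingleton X'' := h''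
    refine subsingleton_of_forall_eq 0 fun x => ?_
    obtain ⟨x', rfl⟩ := (hip x).1 (Subsingleton.elim _ _)
    rw [Subsingleton.elim x' 0, map_zero]
  | cons l L ih =>
    obtain ⟨hproj', hinj', hquot'⟩ := h'
    obtain ⟨hproj'', hinj'', hquot''⟩ := h''
    have hlift := hX.compRight_surjective hL hp
    obtain ⟨i₁, p₁, hi₁, hip₁, hp₁⟩ := exists_exact_quotient hip hp
      (comap_range_evalTensor hi hip hlift hinj'') (map_range_evalTensor hlift)
    exact ⟨.of_exact (compRight_injective R hi) (exact_compRight R hi hip) hlift hproj' hproj'',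
      evalTensor_injective_of_exact hi hip hlift hinj'' hinj',
      ih hL.tail (hX.quotient hL) hi₁ hip₁ hp₁ hquot' hquot''⟩

lemma hasTraceFiltration_tensor (h : SplitQH R A Λ Δ) {L : List Λ} (hL : L.Pairwise (¬ · ≤ ·))
    {m : Λ} (hm : m ∈ L) {U : Type} [AddCommGroup U] [Module R U] (hU : IsFinProj R U) :
    HasTraceFiltration R A Δ L (Δ m ⊗[R] U) := by
  induction L with
  | nil => simp at hm
  | cons l L ih =>
    obtain ⟨hl, hL⟩ := List.pairwise_cons.1 hL
    rcases List.mem_cons.1 hm with rfl | hmL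
    · have hunit := bijective_unit_of_bijective_algebraMap hU (h.bijective_algebraMap_end m)
      have heval := evalTensor_tensor_bijective hU (h.bijective_algebraMap_end m)
      have := Submodule.Quotient.subsingleton_iff.2 (LinearMap.range_eq_top.2 heval.2)
      exact ⟨hU.of_equiv (LinearEquiv.ofBijective _ hunit).symm, heval.1, .of_subsingleton⟩
    · exact .cons_of_hom_eq_zero (hom_tensor_eq_zero hU (h.standard_hom_eq_zero (hl m hmL)))
        (ih hL hmL)

section Complete

variable {L : List Λ} (hL : L.Pairwise (¬ · ≤ ·)) (hmem : ∀ l, l ∈ L)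

include hL hmem in
lemma hasTraceFiltration_of_hasTensorFiltration (h : SplitQH R A Λ Δ) {S : Set Λ} {X : Type}
    [AddCommGroup X] [Module R X] [Module A X] [IsScalarTower R A X]
    (hX : HasTensorFiltration R A Δ S X) : HasTraceFiltration R A Δ L X := by
  refine hX.induction (Q := fun X => HasTraceFiltration R A Δ L X) ?_ ?_ ?_
  · exact fun X _ _ _ _ _ => .of_subsingleton
  · exact fun X' X X'' _ _ _ _ _ _ _ _ _ _ _ _ i p hi hip hp h' h'' =>
      hasTraceFiltration_of_exact (h := h) hL (fun m hm => (hm (hmem m)).elim) hi hip hp h' h''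
  · exact fun l _ U _ _ hU => h.hasTraceFiltration_tensor hL (hmem l) hU

lemma hasTensorFiltration_P (h : SplitQH R A Λ Δ) (l : Λ) :
    HasTensorFiltration R A Δ Set.univ (h.P l) :=
  .of_exact (Submodule.subtype_injective _) (h.epi l).exact_subtype_ker_map (h.epi_surj l)
    ((h.ker_filt l).hasTensorFiltration.mono (Set.subset_univ _))
    (.of_tensorFactor ⟨l, trivial, ModuleCat.of R R, inferInstanceAs (Module.Finite R R),
      inferInstanceAs (Module.Projective R R),
      (TensorProduct.AlgebraTensorModule.rid R A (Δ l)).symm⟩)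

include hL hmem in
lemma hasTraceFiltration_self [Finite Λ] (h : SplitQH R A Λ Δ) : HasTraceFiltration R A Δ L A := by
  obtain ⟨n, i, p, hpi⟩ := h.add_gen (ModuleCat.of A A) (inferInstanceAs (Module.Finite A A))
    (inferInstanceAs (Module.Projective A A))
  have hsum : HasTensorFiltration R A Δ Set.univ (Fin n → ∀ l, h.P l) :=
    .pi _ fun _ => .pi _ h.hasTensorFiltration_P
  exact (h.hasTraceFiltration_of_hasTensorFiltration hL hmem hsum).of_retract i p hpi

end Complete

lemma isFinProj_hom [Finite Λ] (h : SplitQH R A Λ Δ) {N : Type} [AddCommGroup N] [Module R N]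
    [Module A N] [IsScalarTower R A N] (hN : IsFinProj R N)
    (hE : ∀ l, ExtOneVanishes A (Δ l) N) (l : Λ) : IsFinProj R (Δ l →ₗ[A] N) := by
  induction l using WellFoundedGT.induction with
  | ind l ih =>
    have hker : IsFinProj R (LinearMap.ker (h.epi l) →ₗ[A] N) :=
      (h.ker_filt l).hasTensorFiltration.isFinProj_hom (fun m _ => hE m) ih
    have := h.P_proj l
    have := h.P_fin l
    exact .left_of_exact (LinearMap.lcomp_injective_of_surjective _ (h.epi_surj l))
      (exact_lcomp R (h.epi l).exact_subtype_ker_map (h.epi_surj l))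
      ((hE l).lcomp_surjective (Submodule.subtype_injective _) (h.epi l).exact_subtype_ker_map R
        (h.epi_surj l)) hN.hom_of_projective hker

end SplitQH

section Annihilated

variable {R A M D : Type*} [CommRing R] [Ring A] [Algebra R A]
  [AddCommGroup M] [Module R M] [Module A M] [IsScalarTower R A M]
  [AddCommGroup D] [Module R D] [Module A D] [IsScalarTower R A D]
  (J : Ideal A) [J.IsTwoSided]

/-- The submodule of `M` of elements annihilated by the two-sided ideal `J`. -/
def annIn (M : Type*) [AddCommGroup M] [Module A M] : Submodule A M where
  carrier := {m | ∀ j ∈ J, j • m = 0}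
  add_mem' hm hn j hj := by rw [smul_add, hm j hj, hn j hj, add_zero]
  zero_mem' _ _ := smul_zero _
  smul_mem' a m hm j hj := by rw [← mul_smul, hm _ (J.mul_mem_right a hj)]

variable {J} in
lemma mem_annIn {m : M} : m ∈ annIn J M ↔ ∀ j ∈ J, j • m = 0 := Iff.rfl

lemma annIn_bot : annIn (⊥ : Ideal A) M = ⊤ :=
  eq_top_iff.2 fun x _ j hj => by rw [(Submodule.mem_bot A).1 hj, zero_smul]

variable {J} in
lemma annIn_anti {J' : Ideal A} [J'.IsTwoSided] (hJ : J ≤ J') : annIn J' M ≤ annIn J M :=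
  fun _ hm j hj => hm j (hJ hj)

variable (R M) in
/-- Evaluation at `1` identifies the maps out of `A ⧸ J` with the elements annihilated by `J`. -/
def annInEquiv : annIn J M ≃ₗ[R] (A ⧸ J →ₗ[A] M) where
  toFun m := Submodule.liftQ J (LinearMap.toSpanSingleton A M m) m.2
  invFun f := ⟨f (Submodule.Quotient.mk 1), fun j hj => by
    rw [← map_smul, ← Submodule.Quotient.mk_smul, smul_eq_mul, mul_one,
      (Submodule.Quotient.mk_eq_zero J).2 hj, map_zero]⟩
  map_add' m n := Submodule.linearMap_qext _ (LinearMap.ext_ring (smul_add 1 (m : M) n))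
  map_smul' r m := Submodule.linearMap_qext _ (LinearMap.ext_ring (smul_comm (1 : A) r (m : M)))
  left_inv m := Subtype.ext (one_smul A (m : M))
  right_inv f := Submodule.linearMap_qext _ (LinearMap.ext_ring (one_smul A _))

/-- Right multiplication by `a` on `A ⧸ J`. -/
def quotRightMul (a : A) : A ⧸ J →ₗ[A] A ⧸ J :=
  Submodule.mapQ J J (LinearMap.toSpanSingleton A A a) fun _ hj => J.mul_mem_right a hj

lemma annInEquiv_smul (a : A) (m : annIn J M) :
    annInEquiv R M J (a • m) = annInEquiv R M J m ∘ₗ quotRightMul J a :=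
  Submodule.linearMap_qext _ (LinearMap.ext_ring (mul_smul 1 a (m : M)).symm)

variable (R M D) in
/-- The comparison of the part of `M` annihilated by `J`, that is of `Hom(A ⧸ J, M)`, with
`Hom(Hom(D, A ⧸ J), Hom(D, M))`, given by composition. -/
noncomputable def annInComparison :
    annIn J M →ₗ[R] (D →ₗ[A] A ⧸ J) →ₗ[R] D →ₗ[A] M :=
  (tensorHomEquiv R A D (D →ₗ[A] A ⧸ J) M).toLinearMap ∘ₗ
    LinearMap.lcomp R M (evalTensor R A D (A ⧸ J)) ∘ₗ (annInEquiv R M J).toLinearMap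

lemma annInComparison_apply (m : annIn J M) (u : D →ₗ[A] A ⧸ J) :
    annInComparison R M D J m u = annInEquiv R M J m ∘ₗ u := rfl

lemma annInComparison_smul (a : A) (m : annIn J M) (u : D →ₗ[A] A ⧸ J) :
    annInComparison R M D J (a • m) u =
      annInComparison R M D J m (LinearMap.compRight R (quotRightMul J a) u) := by
  rw [annInComparison_apply, annInComparison_apply, annInEquiv_smul]
  rfl

variable (R D) in
/-- The preimage in `A` of the trace of `D` in `A ⧸ J`. -/
noncomputable def traceIdeal : Ideal A :=
  (LinearMap.range (evalTensor R A D (A ⧸ J))).comap (Submodule.mkQ J)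

instance : (traceIdeal R D J).IsTwoSided where
  mul_mem_of_left a := by
    rintro ⟨t, ht⟩
    exact ⟨_, (evalTensor_naturality (quotRightMul J a) t).trans (congrArg _ ht)⟩

omit [J.IsTwoSided] in
lemma le_traceIdeal : J ≤ traceIdeal R D J :=
  (Submodule.ker_mkQ J).ge.trans (LinearMap.ker_le_comap _)

variable (R D) in
omit [J.IsTwoSided] in
/-- The quotient of `A ⧸ J` by the trace of `D`. -/
noncomputable def traceQuotientEquiv :
    ((A ⧸ J) ⧸ LinearMap.range (evalTensor R A D (A ⧸ J))) ≃ₗ[A] A ⧸ traceIdeal R D J :=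
  Submodule.quotEquivOfEq _ _
      (Submodule.map_comap_eq_of_surjective (Submodule.mkQ_surjective J) _).symm ≪≫ₗ
    Submodule.quotientQuotientEquivQuotient J (traceIdeal R D J) (le_traceIdeal J)

lemma annInComparison_eq_zero_iff (m : annIn J M) :
    annInComparison R M D J m = 0 ↔ (m : M) ∈ annIn (traceIdeal R D J) M := by
  have hcomp : annInComparison R M D J m = 0 ↔
      annInEquiv R M J m ∘ₗ evalTensor R A D (A ⧸ J) = 0 :=
    (tensorHomEquiv R A D (D →ₗ[A] A ⧸ J) M).map_eq_zero_iff
  rw [hcomp, mem_annIn]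
  constructor
  · rintro h j ⟨t, ht⟩
    have hj := LinearMap.congr_fun h t
    rwa [LinearMap.comp_apply, ht] at hj
  · intro h
    refine LinearMap.ext fun t => ?_
    obtain ⟨a, ha⟩ := Submodule.mkQ_surjective J (evalTensor R A D (A ⧸ J) t)
    rw [LinearMap.comp_apply, ← ha]
    exact h a ⟨t, ha.symm⟩

variable {J} in
lemma annIn_traceIdeal_eq_top (hM : annIn J M = ⊤) (hD : ∀ f : D →ₗ[A] M, f = 0) :
    annIn (traceIdeal R D J) M = ⊤ := by
  refine eq_top_iff.2 fun y _ => ?_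
  refine (annInComparison_eq_zero_iff J ⟨y, hM ▸ trivial⟩).1 ?_
  ext u : 1
  exact hD _

end Annihilated

section Layer

lemma annInComparison_surjective {R : Type*} {A D M : Type u} [CommRing R] [Ring A] [Algebra R A]
    [AddCommGroup M] [Module R M] [Module A M] [IsScalarTower R A M]
    [AddCommGroup D] [Module R D] [Module A D] [IsScalarTower R A D]
    {J : Ideal A} [J.IsTwoSided] (hinj : Function.Injective (evalTensor R A D (A ⧸ J)))
    (hE : ExtOneVanishes A ((A ⧸ J) ⧸ LinearMap.range (evalTensor R A D (A ⧸ J))) M) :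
    Function.Surjective (annInComparison R M D J) :=
  (tensorHomEquiv R A D _ M).surjective.comp
    ((hE.lcomp_surjective hinj (LinearMap.exact_map_mkQ_range _) R
      (Submodule.mkQ_surjective _)).comp (annInEquiv R M J).surjective)

lemma exists_tensor_linearMap_of_dual {R A N T U V : Type*} [CommRing R] [Ring A] [Algebra R A]
    [AddCommGroup N] [Module R N] [Module A N] [IsScalarTower R A N]
    [AddCommGroup T] [Module R T] [Module A T]
    [AddCommGroup U] [Module R U] [AddCommGroup V] [Module R V] (hU : IsFinProj R U)
    (ρ : A → U →ₗ[R] U) (γ : N ≃ₗ[R] U →ₗ[R] R) (hγ : ∀ a y u, γ (a • y) u = γ y (ρ a u))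
    (θ : T →ₗ[R] U →ₗ[R] V) (hθ : ∀ a t u, θ (a • t) u = θ t (ρ a u))
    (hs : Function.Surjective θ) :
    ∃ δ : T →ₗ[A] N ⊗[R] V, Function.Surjective δ ∧ ∀ t, δ t = 0 ↔ θ t = 0 := by
  obtain ⟨_, _⟩ := hU
  let β : N ⊗[R] V ≃ₗ[R] U →ₗ[R] V :=
    TensorProduct.congr γ (LinearEquiv.refl R V) ≪≫ₗ dualTensorHomEquiv R U V
  have hβ : ∀ (a : A) (x : N ⊗[R] V) (u : U), β (a • x) u = β x (ρ a u) := fun a x u => by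
    induction x with
    | zero => simp
    | tmul y v => simp [β, TensorProduct.smul_tmul', hγ]
    | add x x' hx hx' => simp only [smul_add, map_add, LinearMap.add_apply, hx, hx']
  refine ⟨{ toFun := fun t => β.symm (θ t), map_add' := by simp, map_smul' := fun a t => ?_ },
    β.symm.surjective.comp hs, fun t => β.symm.map_eq_zero_iff⟩
  refine β.injective (LinearMap.ext fun u => ?_)
  simp [hβ, hθ]

end Layer

section AnnInFiltration

variable {R : Type} [CommRing R] {A : Type} [Ring A] [Algebra R A] {Λ : Type}
  {Δ : Λ → Type} [∀ l, AddCommGroup (Δ l)] [∀ l, Module R (Δ l)] [∀ l, Module A (Δ l)]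
  [∀ l, IsScalarTower R A (Δ l)]
  {L : List Λ} {J : Ideal A} [J.IsTwoSided]

lemma exists_equiv_dual_of_annIn_eq_top {l : Λ} {N : Type} [AddCommGroup N] [Module R N]
    [Module A N] [IsScalarTower R A N] (hN : annIn J N = ⊤) (e : (Δ l →ₗ[A] N) ≃ₗ[R] R)
    (hinj : Function.Injective (evalTensor R A (Δ l) (A ⧸ J)))
    (hquot : HasTensorFiltration R A Δ {m | m ∈ L}
      ((A ⧸ J) ⧸ LinearMap.range (evalTensor R A (Δ l) (A ⧸ J))))
    (hzero : ∀ m ∈ L, ∀ f : Δ m →ₗ[A] N, f = 0) (hE : ∀ m ∈ L, ExtOneVanishes A (Δ m) N) :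
    ∃ γ : N ≃ₗ[R] (Δ l →ₗ[A] A ⧸ J) →ₗ[R] R, ∀ a y u,
      γ (a • y) u = γ y (LinearMap.compRight R (quotRightMul J a) u) := by
  have hcomp : Function.Injective (annInComparison R N (Δ l) J) := by
    rw [injective_iff_map_eq_zero]
    intro y hy
    rw [annInComparison_eq_zero_iff] at hy
    have hquot' := hquot.of_equiv (traceQuotientEquiv R (Δ l) J)
    have hy0 := (annInEquiv R N (traceIdeal R (Δ l) J)).map_eq_zero_iff.1
      (hquot'.hom_eq_zero hzero (annInEquiv R N _ ⟨y, hy⟩))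
    exact Subtype.ext ((Submodule.mk_eq_zero _ _).1 hy0)
  let top : N ≃ₗ[A] annIn J N := (LinearEquiv.ofTop _ hN).symm
  refine ⟨top.restrictScalars R ≪≫ₗ LinearEquiv.ofBijective _ ⟨hcomp,
    annInComparison_surjective hinj (hquot.extOneVanishes hE)⟩ ≪≫ₗ LinearEquiv.congrRight e,
    fun a y u => congrArg e ?_⟩
  exact annInComparison_smul J a (top y) u

variable {N : Λ → Type} [∀ l, AddCommGroup (N l)] [∀ l, Module R (N l)]
  [∀ l, Module A (N l)] [∀ l, IsScalarTower R A (N l)]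
  {M : Type} [AddCommGroup M] [Module R M] [Module A M] [IsScalarTower R A M]

lemma hasTensorFiltration_annIn (hN : ∀ l, Nonempty ((Δ l →ₗ[A] N l) ≃ₗ[R] R))
    (hN0 : ∀ l m, l ≠ m → ∀ f : Δ l →ₗ[A] N m, f = 0)
    (hNE : ∀ l m, ExtOneVanishes A (Δ l) (N m)) (hM : ∀ l, ExtOneVanishes A (Δ l) M)
    (hV : ∀ l, IsFinProj R (Δ l →ₗ[A] M)) (hL : L.Nodup)
    (hJ : HasTraceFiltration R A Δ L (A ⧸ J)) (hNJ : ∀ l ∈ L, annIn J (N l) = ⊤) :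
    HasTensorFiltration R A N Set.univ (annIn J M) := by
  induction L generalizing J with
  | nil =>
    have : Subsingleton (A ⧸ J) := hJ
    have : Subsingleton (annIn J M) := (annInEquiv R M J).injective.subsingleton
    exact .of_subsingleton
  | cons l L ih =>
    obtain ⟨hU, hinj, hquot⟩ := hJ
    obtain ⟨hlL, hL⟩ := List.nodup_cons.1 hL
    have hquot' : HasTensorFiltration R A Δ {m | m ∈ L} _ :=
      hquot.hasTensorFiltration fun _ => id
    have hne : ∀ m ∈ L, m ≠ l := fun m hm hml => hlL (hml ▸ hm)
    have hsub := ih hL (hquot.of_equiv (traceQuotientEquiv R (Δ l) J).symm) fun m hm =>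
      annIn_traceIdeal_eq_top (hNJ m (by simp [hm])) (hN0 l m (hne m hm).symm)
    obtain ⟨e⟩ := hN l
    obtain ⟨γ, hγ⟩ := exists_equiv_dual_of_annIn_eq_top (hNJ l (by simp)) e hinj hquot'
      (fun m hm => hN0 m l (hne m hm)) fun m _ => hNE m l
    obtain ⟨δ, hδ, hδ0⟩ := exists_tensor_linearMap_of_dual hU _ γ hγ
      (annInComparison R M (Δ l) J) (annInComparison_smul J)
      (annInComparison_surjective hinj (hquot'.extOneVanishes fun m _ => hM m))
    have hle : annIn (traceIdeal R (Δ l) J) M ≤ annIn J M := annIn_anti (le_traceIdeal J)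
    have hexact : Function.Exact (Submodule.inclusion hle) δ := fun m => by
      rw [hδ0, annInComparison_eq_zero_iff]
      exact ⟨fun hm => ⟨⟨m, hm⟩, rfl⟩, fun ⟨m', hm'⟩ => hm' ▸ m'.2⟩
    exact .of_exact (Submodule.inclusion_injective hle) hexact hδ hsub
      (.of_tensorFactor ⟨l, trivial, ModuleCat.of R _, (hV l).finite, (hV l).projective,
        .refl _ _⟩)

end AnnInFiltration

namespace SplitQH

variable {R : Type} [CommRing R] {A : Type} [Ring A] [Algebra R A] {Λ : Type} [Finite Λ]
  [PartialOrder Λ] {Δ : Λ → Type} [∀ l, AddCommGroup (Δ l)] [∀ l, Module R (Δ l)]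
  [∀ l, Module A (Δ l)] [∀ l, IsScalarTower R A (Δ l)]
  {N : Λ → Type} [∀ l, AddCommGroup (N l)] [∀ l, Module R (N l)] [∀ l, Module A (N l)]
  [∀ l, IsScalarTower R A (N l)] (h : SplitQH R A Λ Δ)
  (hN : ∀ l, Nonempty ((Δ l →ₗ[A] N l) ≃ₗ[R] R)) (hN0 : ∀ l m, l ≠ m → ∀ f : Δ l →ₗ[A] N m, f = 0)
  (hNE : ∀ l m, ExtOneVanishes A (Δ l) (N m))

include h hN hN0 hNE

lemma isFinProj_costandard (l : Λ) : IsFinProj R (N l) := by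
  obtain ⟨L, hL, hmem⟩ := exists_list_pairwise_not_le Λ
  have hA : HasTensorFiltration R A Δ Set.univ A :=
    (h.hasTraceFiltration_self hL hmem).hasTensorFiltration fun _ _ => trivial
  have hHom : ∀ m, IsFinProj R (Δ m →ₗ[A] N l) := fun m => by
    by_cases hml : m = l
    · subst hml
      exact IsFinProj.self.of_equiv (hN m).some
    · have := subsingleton_of_forall_eq 0 (hN0 m l hml)
      exact .of_subsingleton
  exact (hA.isFinProj_hom (fun m _ => hNE m l) fun m _ => hHom m).of_equiv
    (LinearMap.ringLmapEquivSelf A R (N l)).symm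

theorem inFilt_costandard_of_extOneVanishes {M : Type} [AddCommGroup M] [Module R M] [Module A M]
    [IsScalarTower R A M] (hMfin : IsFinProj R M) (hM : ∀ l, ExtOneVanishes A (Δ l) M) :
    InFilt R A Λ N Set.univ M := by
  obtain ⟨L, hL, hmem⟩ := exists_list_pairwise_not_le Λ
  have hnodup : L.Nodup := hL.imp fun hab heq => hab heq.le
  have hquot : HasTraceFiltration R A Δ L (A ⧸ (⊥ : Ideal A)) :=
    (h.hasTraceFiltration_self hL hmem).of_equiv (Submodule.quotEquivOfEqBot _ rfl)
  have hfilt := hasTensorFiltration_annIn hN hN0 hNE hM (h.isFinProj_hom hMfin hM) hnodup hquot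
    fun _ _ => annIn_bot
  have := hMfin.finite
  have := Module.Finite.of_restrictScalars_finite R A M
  exact (hfilt.of_equiv (LinearEquiv.ofTop _ annIn_bot)).inFilt

end SplitQH

section Duality

variable {R : Type} [CommRing R] {A : Type} [Ring A] [Algebra R A]

section DualMap

variable {Y' Y Y'' : Type} [AddCommGroup Y'] [Module R Y'] [Module Aᵐᵒᵖ Y']
  [IsScalarTower R Aᵐᵒᵖ Y'] [AddCommGroup Y] [Module R Y] [Module Aᵐᵒᵖ Y]
  [IsScalarTower R Aᵐᵒᵖ Y] [AddCommGroup Y''] [Module R Y''] [Module Aᵐᵒᵖ Y'']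
  [IsScalarTower R Aᵐᵒᵖ Y''] {i : Y' →ₗ[Aᵐᵒᵖ] Y} {p : Y →ₗ[Aᵐᵒᵖ] Y''}

variable (R) in
/-- The `R`-dual of a map of right `A`-modules, a map of left `A`-modules. -/
def opDualMap (i : Y' →ₗ[Aᵐᵒᵖ] Y) : (Y →ₗ[R] R) →ₗ[A] (Y' →ₗ[R] R) where
  toFun := LinearMap.lcomp R R (i.restrictScalars R)
  map_add' := map_add _
  map_smul' a f := by
    ext y
    simp

lemma opDualMap_injective (hp : Function.Surjective p) : Function.Injective (opDualMap R p) :=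
  LinearMap.lcomp_injective_of_surjective (p.restrictScalars R) hp

lemma exact_opDualMap (hip : Function.Exact i p) (hp : Function.Surjective p) :
    Function.Exact (opDualMap R p) (opDualMap R i) :=
  exact_lcomp R (i := i.restrictScalars R) (p := p.restrictScalars R) hip hp

lemma opDualMap_surjective (hi : Function.Injective i) (hip : Function.Exact i p)
    (hp : Function.Surjective p) [Module.Projective R Y''] :
    Function.Surjective (opDualMap R i) := by
  have hsplit := Module.projective_lifting_property (p.restrictScalars R) LinearMap.id hp
  have hexact : Function.Exact (i.restrictScalars R) (p.restrictScalars R) := hip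
  obtain ⟨-, r, hr⟩ := (hexact.split_tfae'.out 0 1 rfl rfl).1 ⟨hi, hsplit⟩
  exact fun f => ⟨f ∘ₗ r, LinearMap.ext fun y => congrArg f (LinearMap.congr_fun hr y)⟩

end DualMap

variable {E : Type} [AddCommGroup E] [Module R E] [Module Aᵐᵒᵖ E] [IsScalarTower R Aᵐᵒᵖ E]
  {X : Type} [AddCommGroup X] [Module R X] [Module A X] [IsScalarTower R A X]
  {Y : Type} [AddCommGroup Y] [Module R Y] [Module A Y] [IsScalarTower R A Y]

variable (R A E X) in
/-- Maps of right modules `E → X*` and maps of left modules `X → E*` both are `A`-balanced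
bilinear forms on `E × X`. -/
def dualFlipEquiv : (E →ₗ[Aᵐᵒᵖ] (X →ₗ[R] R)) ≃ₗ[R] (X →ₗ[A] (E →ₗ[R] R)) where
  toFun f :=
    { toFun := (f.restrictScalars R).flip
      map_add' := map_add _
      map_smul' := fun a x => by ext e; simp }
  invFun g :=
    { toFun := (g.restrictScalars R).flip
      map_add' := map_add _
      map_smul' := fun a e => by ext x; simp }
  map_add' _ _ := rfl
  map_smul' _ _ := rfl
  left_inv _ := rfl
  right_inv _ := rfl

variable (R A X) in
/-- Biduality for left `A`-modules which are reflexive over `R`. -/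
noncomputable def bidualEquiv [Module.IsReflexive R X] : X ≃ₗ[A] ((X →ₗ[R] R) →ₗ[R] R) :=
  .ofBijective (dualFlipEquiv R A (X →ₗ[R] R) X LinearMap.id) (Module.bijective_dual_eval R X)

variable (R A X Y) in
/-- The duality `Hom_A(X, Y) ≃ Hom_{Aᵐᵒᵖ}(Y*, X*)`. -/
noncomputable def homDualEquiv [Module.IsReflexive R Y] :
    (X →ₗ[A] Y) ≃ₗ[R] ((Y →ₗ[R] R) →ₗ[Aᵐᵒᵖ] (X →ₗ[R] R)) where
  toFun f := (dualFlipEquiv R A _ X).symm ((bidualEquiv R A Y).toLinearMap ∘ₗ f)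
  invFun g := (bidualEquiv R A Y).symm.toLinearMap ∘ₗ dualFlipEquiv R A _ X g
  map_add' f g := LinearMap.ext fun y => LinearMap.ext fun x => map_add y (f x) (g x)
  map_smul' r f := LinearMap.ext fun y => LinearMap.ext fun x => map_smul y r (f x)
  left_inv f := LinearMap.ext fun x => (bidualEquiv R A Y).symm_apply_apply (f x)
  right_inv g := (dualFlipEquiv R A _ X).injective
    (LinearMap.ext fun x => (bidualEquiv R A Y).apply_symm_apply (dualFlipEquiv R A _ X g x))

lemma ExtOneVanishes.dual (h : ExtOneVanishes A X Y) [Module.Projective R (Y →ₗ[R] R)]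
    [Module.IsReflexive R Y] : ExtOneVanishes Aᵐᵒᵖ (Y →ₗ[R] R) (X →ₗ[R] R) := by
  intro E _ _ f hf g
  let : Module R E := Module.compHom E (algebraMap R Aᵐᵒᵖ)
  have : IsScalarTower R Aᵐᵒᵖ E := .of_algebraMap_smul fun _ _ => rfl
  -- `0 → Y → E* → (ker f)* → 0` is exact, so the transpose of `g` lifts to a map `X → E*`.
  have hfexact := f.exact_subtype_ker_map
  have hexact : Function.Exact (opDualMap R f ∘ₗ (bidualEquiv R A Y).toLinearMap)
      (opDualMap R (LinearMap.ker f).subtype) :=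
    (Function.Surjective.comp_exact_iff_exact (bidualEquiv R A Y).surjective).2
      (exact_opDualMap hfexact hf)
  obtain ⟨t, ht⟩ := h.compRight_surjective
    ((opDualMap_injective hf).comp (bidualEquiv R A Y).injective) hexact
    (opDualMap_surjective (LinearMap.ker f).subtype_injective hfexact hf) R
    (dualFlipEquiv R A _ X g)
  exact ⟨(dualFlipEquiv R A E X).symm t, (dualFlipEquiv R A _ X).injective ht⟩

lemma nonempty_dual_tensor_equiv {U : Type} [AddCommGroup U] [Module R U] (hE : IsFinProj R E) :
    Nonempty ((E →ₗ[R] R) ⊗[R] (U →ₗ[R] R) ≃ₗ[A] (E ⊗[R] U →ₗ[R] R)) := by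
  obtain ⟨_, _⟩ := hE
  let e : (E →ₗ[R] R) ⊗[R] (U →ₗ[R] R) ≃ₗ[R] (E ⊗[R] U →ₗ[R] R) :=
    dualTensorHomEquiv R E (U →ₗ[R] R) ≪≫ₗ TensorProduct.lift.equiv (.id R) E U R
  refine ⟨{ e with map_smul' := fun a t => ?_ }⟩
  change e (a • t) = a • e t
  induction t with
  | zero => simp
  | add s t hs ht => simp only [smul_add, map_add, hs, ht]
  | tmul f φ =>
    refine TensorProduct.ext' fun d u => ?_
    simp [e, TensorProduct.smul_tmul']

lemma HasTensorFiltration.dual {Λ : Type} {S : Set Λ} {N : Λ → Type}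
    [∀ l, AddCommGroup (N l)] [∀ l, Module R (N l)] [∀ l, Module Aᵐᵒᵖ (N l)]
    [∀ l, IsScalarTower R Aᵐᵒᵖ (N l)] {Δ : Λ → Type} [∀ l, AddCommGroup (Δ l)]
    [∀ l, Module R (Δ l)] [∀ l, Module A (Δ l)] [∀ l, IsScalarTower R A (Δ l)]
    (hN : ∀ l, IsFinProj R (N l)) (e : ∀ l, (N l →ₗ[R] R) ≃ₗ[A] Δ l)
    (h : HasTensorFiltration R Aᵐᵒᵖ N S E) : HasTensorFiltration R A Δ S (E →ₗ[R] R) := by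
  refine (h.induction (Q := fun Y => IsFinProj R Y ∧
    HasTensorFiltration R A Δ S (Y →ₗ[R] R)) ?_ ?_ ?_).2
  · exact fun Y _ _ _ _ _ => ⟨.of_subsingleton, .of_subsingleton⟩
  · intro X' X X'' _ _ _ _ _ _ _ _ _ _ _ _ i p hi hip hp h' h''
    have := h''.1.projective
    exact ⟨.of_exact (i := i.restrictScalars R) (p := p.restrictScalars R) hi hip hp h'.1 h''.1,
      .of_exact (opDualMap_injective hp) (exact_opDualMap hip hp) (opDualMap_surjective hi hip hp)
        h''.2 h'.2⟩
  · intro l hl U _ _ hU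
    have hU' : IsFinProj R (U →ₗ[R] R) := hU.linearMap .self
    obtain ⟨_, _⟩ := hU
    obtain ⟨_, _⟩ := hN l
    obtain ⟨t⟩ := nonempty_dual_tensor_equiv (A := A) (U := U) (hN l)
    exact ⟨⟨inferInstance, inferInstance⟩, .of_tensorFactor
      ⟨l, hl, ModuleCat.of R (U →ₗ[R] R), hU'.finite, hU'.projective,
        t.symm ≪≫ₗ TensorProduct.AlgebraTensorModule.congr (e l) (.refl R _)⟩⟩

end Duality

lemma IsFinProj.isReflexive {R V : Type*} [CommRing R] [AddCommGroup V] [Module R V]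
    (h : IsFinProj R V) : Module.IsReflexive R V := by
  obtain ⟨_, _⟩ := h
  infer_instance

theorem SplitQH.inFilt_standard_of_extOneVanishes {R : Type} [CommRing R] {A : Type} [Ring A]
    [Algebra R A] {Λ : Type} [Finite Λ] [PartialOrder Λ]
    {Δ : Λ → Type} [∀ l, AddCommGroup (Δ l)] [∀ l, Module R (Δ l)] [∀ l, Module A (Δ l)]
    [∀ l, IsScalarTower R A (Δ l)] {N : Λ → Type} [∀ l, AddCommGroup (N l)]
    [∀ l, Module R (N l)] [∀ l, Module A (N l)] [∀ l, IsScalarTower R A (N l)]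
    (h : SplitQH R A Λ Δ) (hop : SplitQH R Aᵐᵒᵖ Λ fun l => N l →ₗ[R] R)
    (hN : ∀ l, Nonempty ((Δ l →ₗ[A] N l) ≃ₗ[R] R))
    (hN0 : ∀ l m, l ≠ m → ∀ f : Δ l →ₗ[A] N m, f = 0)
    (hNE : ∀ l m, ExtOneVanishes A (Δ l) (N m))
    {M : Type} [AddCommGroup M] [Module R M] [Module A M] [IsScalarTower R A M]
    (hMfin : IsFinProj R M) (hM : ∀ l, ExtOneVanishes A M (N l)) :
    InFilt R A Λ Δ Set.univ M := by
  have hNfin := h.isFinProj_costandard hN hN0 hNE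
  have hNfin' : ∀ l, Module.Projective R (N l →ₗ[R] R) := hop.deltaProjR
  have := fun l => (hNfin l).isReflexive
  have := fun l => (h.isFinProj_standard l).isReflexive
  have := hMfin.isReflexive
  have hdual : InFilt R Aᵐᵒᵖ Λ (fun l => Δ l →ₗ[R] R) Set.univ (M →ₗ[R] R) := by
    refine hop.inFilt_costandard_of_extOneVanishes
      (fun l => (hN l).map fun e => (homDualEquiv R A (Δ l) (N l)).symm ≪≫ₗ e)
      (fun l m hlm f => ?_) (fun l m => (hNE m l).dual) (hMfin.linearMap .self)
      fun l => (hM l).dual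
    exact (homDualEquiv R A (Δ m) (N l)).symm.map_eq_zero_iff.1 (hN0 m l hlm.symm _)
  have := hMfin.finite
  have := Module.Finite.of_restrictScalars_finite R A M
  have hbidual := hdual.hasTensorFiltration.dual
    (fun l => (h.isFinProj_standard l).linearMap .self) fun l => (bidualEquiv R A (Δ l)).symm
  exact (hbidual.of_equiv (bidualEquiv R A M).symm).inFilt

theorem filtration_criterion_via_ext_one_general
    {R : Type} [CommRing R] {A : Type} [Ring A] [Algebra R A] {Λ : Type} [Finite Λ]
    [PartialOrder Λ] {Δ : Λ → Type} [∀ l, AddCommGroup (Δ l)] [∀ l, Module R (Δ l)]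
    [∀ l, Module A (Δ l)] [∀ l, IsScalarTower R A (Δ l)]
    {Nb : Λ → Type} [∀ l, AddCommGroup (Nb l)] [∀ l, Module R (Nb l)]
    [∀ l, Module A (Nb l)] [∀ l, IsScalarTower R A (Nb l)]
    (h : SplitQH R A Λ Δ) (hc : IsCostandard R A Λ Δ Nb)
    {M : Type} [AddCommGroup M] [Module R M] [Module A M] [IsScalarTower R A M]
    [Module.Finite A M] (hMproj : Module.Projective R M) :
    ((∀ l : Λ, extVanish A M (Nb l) 1) → InFilt R A Λ Δ Set.univ M) ∧
    ((∀ l : Λ, extVanish A (Δ l) M 1) → InFilt R A Λ Nb Set.univ M) := by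
  obtain ⟨⟨hop⟩, hN, hN0, hExt⟩ := hc
  have hNE : ∀ l m, ExtOneVanishes A (Δ l) (Nb m) := fun l m =>
    (hExt l m 1 one_pos).extOneVanishes
  have := h.algFin
  have hMfin : IsFinProj R M := ⟨Module.Finite.trans A M, hMproj⟩
  exact ⟨fun hM => h.inFilt_standard_of_extOneVanishes hop hN hN0 hNE hMfin fun l =>
      (hM l).extOneVanishes,
    fun hM => h.inFilt_costandard_of_extOneVanishes hN hN0 hNE hMfin fun l =>
      (hM l).extOneVanishes⟩

noncomputable section

/-- Let `M` be a finitely generated `A`-module which is projective over `R`.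
If `Ext^1_A(M, ∇(λ)) = 0` for all `λ`, then `M ∈ F(Δ̃)`; dually, if `Ext^1_A(Δ(λ), M) = 0`
for all `λ`, then `M ∈ F(∇̃)`. -/
theorem filtration_criterion_via_ext_one
    (R : Type) [CommRing R] [IsNoetherianRing R]
    (A : Type) [Ring A] [Algebra R A]
    (Λ : Type) [Fintype Λ] [PartialOrder Λ]
    (Δ : Λ → Type) [∀ l, AddCommGroup (Δ l)] [∀ l, Module R (Δ l)]
    [∀ l, Module A (Δ l)] [∀ l, IsScalarTower R A (Δ l)]
    (Nb : Λ → Type) [∀ l, AddCommGroup (Nb l)] [∀ l, Module R (Nb l)]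
    [∀ l, Module A (Nb l)] [∀ l, IsScalarTower R A (Nb l)]
    (h : SplitQH R A Λ Δ) (hc : IsCostandard R A Λ Δ Nb)
    (M : Type) [AddCommGroup M] [Module R M] [Module A M] [IsScalarTower R A M]
    [Module.Finite A M] (hMproj : Module.Projective R M) :
    ((∀ l : Λ, extVanish A M (Nb l) 1) → InFilt R A Λ Δ Set.univ M) ∧
    ((∀ l : Λ, extVanish A (Δ l) M 1) → InFilt R A Λ Nb Set.univ M) :=
  filtration_criterion_via_ext_one_general h hc hMproj

end
end
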